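/- arXiv:2311.04510 — 8 statements merged into one kernel-verified Lean document; each statement's English description precedes it below -/
import Mathlib

section
/- Let M be a nonzero Hilbert space contractively contained in the vector-valued Hardy space H²(𝔻, ℂⁿ), and suppose M is nearly invariant under the backward shift S*. Then the orthogonal complement M ⊖ (M ∩ zH²(𝔻, ℂⁿ)) of M ∩ zH²(𝔻, ℂⁿ) inside the Hilbert space M is nonzero and has dimension at most n. -/
noncomputable section
open scoped ENNReal

/-- The vector-valued Hardy space `H²(𝔻, ℂⁿ)`, identified isometrically with the space of
square-summable sequences of Taylor coefficients in `ℂⁿ`. -/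
abbrev H2V (n : ℕ) := lp (fun _ : ℕ => EuclideanSpace ℂ (Fin n)) 2

/-- The subspace `zH²(𝔻, ℂⁿ)` of `H²(𝔻, ℂⁿ)`: those functions vanishing at `0`, i.e. with
zeroth Taylor coefficient `0`. -/
def zH2V (n : ℕ) : Submodule ℂ (H2V n) where
  carrier := {f | f 0 = 0}
  add_mem' := by
    intro a b ha hb
    simp only [Set.mem_setOf_eq] at *
    simp [lp.coeFn_add, ha, hb]
  zero_mem' := by simp [lp.coeFn_zero]
  smul_mem' := by
    intro c a ha
    simp only [Set.mem_setOf_eq] at *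
    simp [lp.coeFn_smul, ha]

/- STATEMENT 2: Let M be a nonzero Hilbert space contractively contained in H²(𝔻, ℂⁿ)
(via the injective linear inclusion ι), nearly invariant under the backward shift S*
(i.e. if f ∈ M and f(0) = 0 then the backward shift of f again lies in M).  Then
M ⊖ (M ∩ zH²(𝔻, ℂⁿ)), the orthogonal complement inside M of the preimage of zH²(𝔻, ℂⁿ),
is nonzero and has dimension at most n. -/
theorem stmt2 (n : ℕ)
    (M : Type*) [NormedAddCommGroup M] [InnerProductSpace ℂ M] [CompleteSpace M]
    [Nontrivial M]
    (ι : M →ₗ[ℂ] H2V n) (hinj : Function.Injective ι)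
    (hcontr : ∀ m : M, ‖ι m‖ ≤ ‖m‖)
    (hnearly : ∀ f : M, ι f 0 = 0 → ∃ g : M, ∀ k : ℕ, ι g k = ι f (k + 1)) :
    ((zH2V n).comap ι)ᗮ ≠ ⊥ ∧ Module.rank ℂ ((zH2V n).comap ι)ᗮ ≤ n := by
  let e0 : M →ₗ[ℂ] EuclideanSpace ℂ (Fin n) :=
    { toFun := fun m => ι m 0
      map_add' := by intro a b; simp [lp.coeFn_add]
      map_smul' := by intro c a; simp [lp.coeFn_smul] }
  let e : M →L[ℂ] EuclideanSpace ℂ (Fin n) := e0.mkContinuous 1 (by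
    intro m
    rw [one_mul]
    exact (lp.norm_apply_le_norm (by norm_num) (ι m) 0).trans (hcontr m))
  have hmem : ∀ m : M, m ∈ (zH2V n).comap ι ↔ ι m 0 = 0 := fun m => Iff.rfl
  have hclosed : IsClosed (((zH2V n).comap ι : Submodule ℂ M) : Set M) :=
    isClosed_singleton.preimage e.continuous (t := {0})
  constructor
  · intro hbot
    have : CompleteSpace ((zH2V n).comap ι : Submodule ℂ M) := hclosed.completeSpace_coe
    have htop : (zH2V n).comap ι = ⊤ := (Submodule.orthogonal_eq_bot_iff).1 hbot
    have h0 : ∀ m : M, ι m 0 = 0 := fun m => (hmem m).1 (htop ▸ Submodule.mem_top)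
    have hk : ∀ k : ℕ, ∀ m : M, ι m k = 0 := by
      intro k
      induction k with
      | zero => exact h0
      | succ k ih =>
        intro m
        obtain ⟨g, hg⟩ := hnearly m (h0 m)
        rw [← hg k]
        exact ih g
    obtain ⟨m, hm⟩ := exists_ne (0 : M)
    apply hm
    apply hinj
    rw [map_zero]
    apply lp.ext
    funext k
    rw [hk k m]
    rfl
  · have hi : Function.Injective (e0.domRestrict ((zH2V n).comap ι)ᗮ) := by
      rw [← LinearMap.ker_eq_bot, LinearMap.ker_eq_bot']
      rintro ⟨m, hm⟩ h
      have h1 : m ∈ (zH2V n).comap ι := h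
      have h2 : m = 0 := inner_self_eq_zero.1 (hm m h1)
      exact Subtype.ext h2
    have := LinearMap.lift_rank_le_of_injective _ hi
    have hr : Module.rank ℂ (EuclideanSpace ℂ (Fin n)) = n := by
      rw [← Module.finrank_eq_rank]; simp
    rw [hr] at this
    simpa using this
end
end

section
/- Let M be a nonzero Hilbert space contractively contained in H²(𝔻, ℂⁿ). Suppose M is nearly invariant under the backward shift S* and that ‖zh‖_M ≥ ‖h‖_M whenever zh ∈ M. Let {g₁, …, g_r} (with 1 ≤ r ≤ n) be an orthonormal basis of M ⊖ (M ∩ zH²(𝔻, ℂⁿ)), and let G be the n×r matrix-valued function on 𝔻 whose columns are g₁, …, g_r, so that for f = (f₁, …, f_r), (Gf)(z) = Σ_{i=1}^r f_i(z) g_i(z). Then N := {f ∈ H²(𝔻, ℂ^r) : Gf ∈ M} is a vector subspace of H²(𝔻, ℂ^r) invariant under the backward shift S*, the linear map 𝒢 : N → M given by f ↦ Gf is a bijection, and for each h ∈ M, if h = Gf with f ∈ N then ‖h‖_M ≥ ‖f‖₂. -/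
noncomputable section
open scoped ENNReal

/-- The backward shift `S*` on `H²(𝔻, ℂⁿ)`: `(S*f)(z) = (f(z) - f(0))/z`. -/
def bshV {n : ℕ} (f : H2V n) : H2V n :=
  ⟨fun k => f (k + 1), by
    apply memℓp_gen
    have hf : Summable fun i => ‖f i‖ ^ (2 : ℝ≥0∞).toReal :=
      (memℓp_gen_iff (by norm_num)).1 (lp.memℓp f)
    exact hf.comp_injective (add_left_injective 1)⟩

/-- The forward shift `S` on `H²(𝔻, ℂⁿ)`: `(Sf)(z) = z f(z)`. -/
def fshV {n : ℕ} (f : H2V n) : H2V n :=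
  ⟨fun k => match k with | 0 => 0 | (j + 1) => f j, by
    apply memℓp_gen
    have hf : Summable fun i => ‖f i‖ ^ (2 : ℝ≥0∞).toReal :=
      (memℓp_gen_iff (by norm_num)).1 (lp.memℓp f)
    apply (summable_nat_add_iff 1).mp
    convert hf using 1⟩

/-- The `i`-th coordinate of the value at `z ∈ 𝔻` of `f ∈ H²(𝔻, ℂⁿ)`. -/
def evC {n : ℕ} (f : H2V n) (z : ℂ) (i : Fin n) : ℂ := ∑' m, f m i * z ^ m

/-- `GRel ι g f m` says that `m` (an element of the contained space `M`) is, as a function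
on the disc, equal to `Gf : z ↦ Σᵢ fᵢ(z) gᵢ(z)`, where `G` is the matrix-valued function
with columns `g₁, …, g_r`. -/
def GRel {n r : ℕ} {M : Type*} [NormedAddCommGroup M] [InnerProductSpace ℂ M]
    (ι : M →ₗ[ℂ] H2V n) (g : Fin r → M) (f : H2V r) (m : M) : Prop :=
  ∀ z ∈ Metric.ball (0 : ℂ) 1, ∀ j : Fin n,
    evC (ι m) z j = ∑ i : Fin r, evC f z i * evC (ι (g i)) z j

/-- Coefficientwise version of `GRel`. -/
def CRel {n r : ℕ} {M : Type*} [NormedAddCommGroup M] [InnerProductSpace ℂ M]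
    (ι : M →ₗ[ℂ] H2V n) (g : Fin r → M) (f : H2V r) (m : M) : Prop :=
  ∀ (k : ℕ) (j : Fin n), ι m k j =
    ∑ i : Fin r, ∑ p ∈ Finset.HasAntidiagonal.antidiagonal k, f p.1 i * ι (g i) p.2 j

theorem aux_coef_le {n : ℕ} (f : H2V n) (k : ℕ) (j : Fin n) : ‖f k j‖ ≤ ‖f‖ :=
  (PiLp.norm_apply_le (f k) j).trans (lp.norm_apply_le_norm (by norm_num) f k)

theorem aux_summable {n : ℕ} (f : H2V n) (j : Fin n) {z : ℂ} (hz : z ∈ Metric.ball (0 : ℂ) 1) :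
    Summable fun m => ‖f m j * z ^ m‖ := by
  have hz1 : ‖z‖ < 1 := by simpa using hz
  refine Summable.of_nonneg_of_le (fun _ => norm_nonneg _) (fun m => ?_)
    ((summable_geometric_of_lt_one (norm_nonneg z) hz1).mul_left ‖f‖)
  rw [norm_mul, norm_pow]
  exact mul_le_mul_of_nonneg_right (aux_coef_le f m j) (by positivity)

theorem aux_unique (c : ℕ → ℂ)
    (h : ∀ z ∈ Metric.ball (0 : ℂ) 1, HasSum (fun m => c m * z ^ m) 0) (k : ℕ) : c k = 0 := by
  have hp : HasFPowerSeriesAt (0 : ℂ → ℂ) (FormalMultilinearSeries.ofScalars ℂ c) 0 := by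
    rw [hasFPowerSeriesAt_iff]
    filter_upwards [Metric.ball_mem_nhds (0 : ℂ) one_pos] with z hz
    simpa [FormalMultilinearSeries.coeff_ofScalars, mul_comm] using h z hz
  have := hp.eq_zero
  have h2 : (FormalMultilinearSeries.ofScalars ℂ c).coeff k = 0 := by rw [this]; rfl
  simpa [FormalMultilinearSeries.coeff_ofScalars] using h2

theorem aux_prod {n r : ℕ} (f : H2V r) (h : H2V n) (i : Fin r) (j : Fin n) {z : ℂ}
    (hz : z ∈ Metric.ball (0 : ℂ) 1) :
    HasSum (fun k => (∑ p ∈ Finset.HasAntidiagonal.antidiagonal k, f p.1 i * h p.2 j) * z ^ k)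
      (evC f z i * evC h z j) := by
  have h1 := aux_summable f i hz
  have h2 := aux_summable h j hz
  have hs := (summable_norm_sum_mul_antidiagonal_of_summable_norm h1 h2).of_norm
  have ht := tsum_mul_tsum_eq_tsum_sum_antidiagonal_of_summable_norm h1 h2
  unfold evC
  rw [ht]
  have e : (fun k => (∑ p ∈ Finset.HasAntidiagonal.antidiagonal k, f p.1 i * h p.2 j) * z ^ k) =
      fun k => ∑ p ∈ Finset.HasAntidiagonal.antidiagonal k, f p.1 i * z ^ p.1 * (h p.2 j * z ^ p.2) := by
    funext k
    rw [Finset.sum_mul]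
    refine Finset.sum_congr rfl fun p hp => ?_
    rw [← Finset.HasAntidiagonal.mem_antidiagonal.1 hp, pow_add]
    ring
  rw [e]
  exact hs.hasSum

theorem GRel_iff_CRel {n r : ℕ} {M : Type*} [NormedAddCommGroup M] [InnerProductSpace ℂ M]
    (ι : M →ₗ[ℂ] H2V n) (g : Fin r → M) (f : H2V r) (m : M) :
    GRel ι g f m ↔ CRel ι g f m := by
  have key : ∀ z ∈ Metric.ball (0 : ℂ) 1, ∀ j : Fin n,
      HasSum (fun k => (∑ i : Fin r, ∑ p ∈ Finset.HasAntidiagonal.antidiagonal k,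
        f p.1 i * ι (g i) p.2 j) * z ^ k) (∑ i : Fin r, evC f z i * evC (ι (g i)) z j) := by
    intro z hz j
    have := hasSum_sum (s := (Finset.univ : Finset (Fin r)))
      fun i _ => aux_prod f (ι (g i)) i j hz
    simpa only [Finset.sum_mul] using this
  have key2 : ∀ z ∈ Metric.ball (0 : ℂ) 1, ∀ j : Fin n,
      HasSum (fun k => ι m k j * z ^ k) (evC (ι m) z j) :=
    fun z hz j => (aux_summable (ι m) j hz).of_norm.hasSum
  constructor
  · intro h k j
    have := aux_unique (fun k => ι m k j - ∑ i : Fin r, ∑ p ∈ Finset.HasAntidiagonal.antidiagonal k,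
        f p.1 i * ι (g i) p.2 j) (fun z hz => by
          have h3 := (key2 z hz j).sub (key z hz j)
          rw [h z hz j, sub_self] at h3
          simpa only [sub_mul] using h3) k
    exact sub_eq_zero.1 this
  · intro h z hz j
    have h1 := key2 z hz j
    have h2 := key z hz j
    have e : (fun k => ι m k j * z ^ k) = fun k => (∑ i : Fin r, ∑ p ∈ Finset.HasAntidiagonal.antidiagonal k,
        f p.1 i * ι (g i) p.2 j) * z ^ k := by
      funext k; rw [h k j]
    rw [e] at h1
    exact h1.unique h2

section
variable {n r : ℕ} {M : Type*} [NormedAddCommGroup M] [InnerProductSpace ℂ M]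
  {ι : M →ₗ[ℂ] H2V n} {g : Fin r → M}

theorem CRel.add {f f' : H2V r} {m m' : M} (h : CRel ι g f m) (h' : CRel ι g f' m') :
    CRel ι g (f + f') (m + m') := by
  intro k j
  have := h k j
  have := h' k j
  simp_all [add_mul, Finset.sum_add_distrib]

theorem CRel.smul {f : H2V r} {m : M} (c : ℂ) (h : CRel ι g f m) :
    CRel ι g (c • f) (c • m) := by
  intro k j
  have := h k j
  simp_all [mul_assoc, Finset.mul_sum]

theorem CRel.zero : CRel ι g (0 : H2V r) (0 : M) := by
  intro k j
  simp

theorem CRel.inj (hinj : Function.Injective ι) {f : H2V r} {m m' : M} (h : CRel ι g f m)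
    (h' : CRel ι g f m') : m = m' := by
  apply hinj
  ext k j
  rw [h k j, h' k j]

theorem aux_comb (a : Fin r → ℂ) (k : ℕ) (j : Fin n) :
    ι (∑ i, a i • g i) k j = ∑ i, a i * ι (g i) k j := by
  rw [map_sum, lp.coeFn_sum]
  simp

theorem CRel.bsh (hnearly : ∀ f : M, ι f 0 = 0 → ∃ g : M, ι g = bshV (ι f))
    {f : H2V r} {m : M} (h : CRel ι g f m) :
    ∃ m', ι m' = bshV (ι (m - ∑ i, f 0 i • g i)) ∧ CRel ι g (bshV f) m' := by
  have h0 : ι (m - ∑ i, f 0 i • g i) 0 = 0 := by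
    ext j
    have := h 0 j
    rw [map_sub, lp.coeFn_sub]
    simp only [Pi.sub_apply, PiLp.sub_apply, PiLp.zero_apply]
    rw [aux_comb, this]
    simp
  obtain ⟨m', hm'⟩ := hnearly _ h0
  refine ⟨m', hm', fun k j => ?_⟩
  rw [hm']
  change ι (m - ∑ i, f 0 i • g i) (k + 1) j = ∑ i : Fin r, ∑ p ∈ Finset.HasAntidiagonal.antidiagonal k,
    f (p.1 + 1) i * ι (g i) p.2 j
  have := h (k + 1) j
  rw [map_sub, lp.coeFn_sub]
  simp only [Pi.sub_apply, PiLp.sub_apply]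
  rw [aux_comb, this, ← Finset.sum_sub_distrib]
  refine Finset.sum_congr rfl fun i _ => ?_
  rw [Finset.Nat.sum_antidiagonal_succ]
  simp

theorem CRel.head_zero (hON : Orthonormal ℂ g) (hgmem : ∀ i, g i ∈ ((zH2V n).comap ι)ᗮ)
    {f : H2V r} (h : CRel ι g f 0) : f 0 = 0 := by
  have hK : (∑ i, f 0 i • g i) ∈ (zH2V n).comap ι := by
    change ι (∑ i, f 0 i • g i) 0 = 0
    ext j
    rw [aux_comb]
    have := h 0 j
    simp only [Finset.Nat.antidiagonal_zero, Finset.sum_singleton] at this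
    rw [← this]
    simp
  have hK' : (∑ i, f 0 i • g i) ∈ ((zH2V n).comap ι)ᗮ :=
    Submodule.sum_mem _ fun i _ => Submodule.smul_mem _ _ (hgmem i)
  have h0 : (∑ i, f 0 i • g i) = 0 := by
    have := (Submodule.mem_orthogonal _ _).1 hK' _ hK
    exact inner_self_eq_zero.1 this
  have := Fintype.linearIndependent_iff.1 hON.linearIndependent _ h0
  ext i
  simpa using this i

theorem CRel.eq_zero (hinj : Function.Injective ι)
    (hnearly : ∀ f : M, ι f 0 = 0 → ∃ g : M, ι g = bshV (ι f))
    (hON : Orthonormal ℂ g) (hgmem : ∀ i, g i ∈ ((zH2V n).comap ι)ᗮ)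
    (k : ℕ) : ∀ {f : H2V r}, CRel ι g f 0 → f k = 0 := by
  induction k with
  | zero => intro f h; exact h.head_zero hON hgmem
  | succ k ih =>
    intro f h
    obtain ⟨m', hm', hc⟩ := h.bsh hnearly
    have : m' = 0 := by
      apply hinj
      rw [hm', h.head_zero hON hgmem]
      ext k j
      change ι (0 - ∑ i, (0 : EuclideanSpace ℂ (Fin r)) i • g i) (k + 1) j = _
      simp
    rw [this] at hc
    exact ih hc

theorem aux_step [CompleteSpace M]
    (hcontr : ∀ m : M, ‖ι m‖ ≤ ‖m‖)
    (hnearly : ∀ f : M, ι f 0 = 0 → ∃ g : M, ι g = bshV (ι f))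
    (hz : ∀ h m : M, ι m = fshV (ι h) → ‖h‖ ≤ ‖m‖)
    (hON : Orthonormal ℂ g)
    (hgspan : Submodule.span ℂ (Set.range g) = ((zH2V n).comap ι)ᗮ) (m : M) :
    ∃ (a : EuclideanSpace ℂ (Fin r)) (h : M),
      ‖a‖ ^ 2 + ‖h‖ ^ 2 ≤ ‖m‖ ^ 2 ∧
      (∀ j, ι m 0 j = ∑ i, a i * ι (g i) 0 j) ∧
      (∀ k j, ι m (k + 1) j = ∑ i, a i * ι (g i) (k + 1) j + ι h k j) := by
  set K := (zH2V n).comap ι with hKdef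
  have hclosed : IsClosed (K : Set M) := by
    let ev : M →ₗ[ℂ] EuclideanSpace ℂ (Fin n) :=
      { toFun := fun m => ι m 0
        map_add' := by intro x y; simp
        map_smul' := by intro c x; simp }
    have hc : Continuous ev := by
      refine (ev.mkContinuous 1 fun x => ?_).continuous
      rw [one_mul]
      exact (lp.norm_apply_le_norm (by norm_num) (ι x) 0).trans (hcontr x)
    have : (K : Set M) = ev ⁻¹' {0} := by
      ext x; rfl
    rw [this]
    exact isClosed_singleton.preimage hc
  have : CompleteSpace K := hclosed.completeSpace_coe
  let a : EuclideanSpace ℂ (Fin r) := WithLp.toLp 2 fun i => inner ℂ (g i) m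
  have ha : ∀ i, a i = inner ℂ (g i) m := fun i => rfl
  let s : M := ∑ i, a i • g i
  have hs : s ∈ Kᗮ := by
    rw [← hgspan]
    exact Submodule.sum_mem _ fun i _ =>
      Submodule.smul_mem _ _ (Submodule.subset_span ⟨i, rfl⟩)
  have hgu : ∀ i, inner ℂ (g i) (m - s) = 0 := by
    intro i
    rw [inner_sub_right, hON.inner_right_fintype, ha, sub_self]
  have hu : m - s ∈ K := by
    rw [← Submodule.orthogonal_orthogonal K, ← hgspan, Submodule.mem_orthogonal]
    intro x hx
    induction hx using Submodule.span_induction with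
    | mem x hx => obtain ⟨i, rfl⟩ := hx; exact hgu i
    | zero => simp
    | add x y _ _ hx hy => rw [inner_add_left, hx, hy, add_zero]
    | smul c x _ hx => rw [inner_smul_left, hx, mul_zero]
  have hu0 : ι (m - s) 0 = 0 := hu
  obtain ⟨h, hh⟩ := hnearly _ hu0
  have hnorm : ‖h‖ ≤ ‖m - s‖ := by
    apply hz
    rw [hh]
    ext k j
    cases k with
    | zero => rw [hu0]; rfl
    | succ k => rfl
  have hsnorm : ‖s‖ ^ 2 = ‖a‖ ^ 2 := by
    have h1 : inner ℂ s s = ∑ i, (starRingEnd ℂ) (a i) * a i := hON.inner_sum _ _ _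
    have h2 : inner ℂ a a = ∑ i, (starRingEnd ℂ) (a i) * a i := by
      rw [PiLp.inner_apply]
      exact Finset.sum_congr rfl fun i _ => by rw [RCLike.inner_apply, mul_comm]
    have h3 : (inner ℂ s s : ℂ) = inner ℂ a a := by rw [h1, h2]
    rw [inner_self_eq_norm_sq_to_K, inner_self_eq_norm_sq_to_K] at h3
    exact_mod_cast h3
  have hpyth : ‖m‖ ^ 2 = ‖s‖ ^ 2 + ‖m - s‖ ^ 2 := by
    have h0 : inner ℂ s (m - s) = 0 := by
      rw [← inner_conj_symm, (Submodule.mem_orthogonal _ _).1 hs _ hu, map_zero]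
    have := norm_add_sq_eq_norm_sq_add_norm_sq_of_inner_eq_zero s (m - s) h0
    rw [add_sub_cancel] at this
    nlinarith [this]
  have hdec : ∀ k j, ι m k j = ∑ i, a i * ι (g i) k j + ι (m - s) k j := by
    intro k j
    rw [← aux_comb (ι := ι) (g := g) (fun i => a i), map_sub, lp.coeFn_sub]
    simp only [Pi.sub_apply, PiLp.sub_apply]
    exact (add_sub_cancel _ _).symm
  refine ⟨a, h, ?_, fun j => ?_, fun k j => ?_⟩
  · rw [hpyth, hsnorm]
    gcongr
  · rw [hdec, hu0]; simp
  · rw [hdec, hh]; rfl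

theorem aux_exists [CompleteSpace M]
    (hcontr : ∀ m : M, ‖ι m‖ ≤ ‖m‖)
    (hnearly : ∀ f : M, ι f 0 = 0 → ∃ g : M, ι g = bshV (ι f))
    (hz : ∀ h m : M, ι m = fshV (ι h) → ‖h‖ ≤ ‖m‖)
    (hON : Orthonormal ℂ g)
    (hgspan : Submodule.span ℂ (Set.range g) = ((zH2V n).comap ι)ᗮ) (m : M) :
    ∃ f : H2V r, CRel ι g f m ∧ ‖f‖ ≤ ‖m‖ := by
  choose a T hn h0 hs using aux_step hcontr hnearly hz hON hgspan
  have hsum : ∀ k, ∀ m, ∑ i ∈ Finset.range k, ‖a (T^[i] m)‖ ^ 2 + ‖T^[k] m‖ ^ 2 ≤ ‖m‖ ^ 2 := by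
    intro k m
    induction k with
    | zero => simp
    | succ k ih =>
      rw [Finset.sum_range_succ, Function.iterate_succ_apply']
      have := hn (T^[k] m)
      linarith
  have hle : ∀ k, ∑ i ∈ Finset.range k, ‖a (T^[i] m)‖ ^ 2 ≤ ‖m‖ ^ 2 := fun k => by
    have := hsum k m
    nlinarith [sq_nonneg ‖T^[k] m‖]
  have hsm : Summable fun i => ‖a (T^[i] m)‖ ^ 2 :=
    summable_of_sum_range_le (fun _ => by positivity) hle
  have hmem : Memℓp (fun i => a (T^[i] m)) 2 := by
    apply memℓp_gen
    simpa using hsm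
  refine ⟨⟨_, hmem⟩, fun k j => ?_, ?_⟩
  · change ι m k j = ∑ i : Fin r, ∑ p ∈ Finset.HasAntidiagonal.antidiagonal k,
      a (T^[p.1] m) i * ι (g i) p.2 j
    clear hle hsm hmem
    induction k generalizing m with
    | zero => simpa using h0 m j
    | succ k ih =>
      rw [hs, ih (T m), ← Finset.sum_add_distrib]
      refine Finset.sum_congr rfl fun i _ => ?_
      rw [Finset.Nat.sum_antidiagonal_succ]
      simp
  · refine (sq_le_sq₀ (norm_nonneg _) (norm_nonneg _)).1 ?_
    have := lp.norm_rpow_eq_tsum (p := 2) (by norm_num)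
      (⟨fun i => a (T^[i] m), hmem⟩ : H2V r)
    simp only [ENNReal.toReal_ofNat, Real.rpow_ofNat] at this
    rw [this]
    exact Real.tsum_le_of_sum_range_le (fun _ => by positivity) hle

theorem CRel.unique (hinj : Function.Injective ι)
    (hnearly : ∀ f : M, ι f 0 = 0 → ∃ g : M, ι g = bshV (ι f))
    (hON : Orthonormal ℂ g) (hgmem : ∀ i, g i ∈ ((zH2V n).comap ι)ᗮ)
    {f f' : H2V r} {m : M} (h : CRel ι g f m) (h' : CRel ι g f' m) : f = f' := by
  have hd : CRel ι g (f + (-1 : ℂ) • f') 0 := by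
    have := h.add (h'.smul (-1 : ℂ))
    simpa using this
  ext k i
  have := CRel.eq_zero hinj hnearly hON hgmem k hd
  have h2 := congrArg (fun v : EuclideanSpace ℂ (Fin r) => v i) this
  simp at h2
  linear_combination h2

end

theorem stmt3 (n r : ℕ) (hr1 : 1 ≤ r) (hrn : r ≤ n)
    (M : Type*) [NormedAddCommGroup M] [InnerProductSpace ℂ M] [CompleteSpace M]
    [Nontrivial M]
    (ι : M →ₗ[ℂ] H2V n) (hinj : Function.Injective ι)
    (hcontr : ∀ m : M, ‖ι m‖ ≤ ‖m‖)
    -- nearly invariant under S* :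
    (hnearly : ∀ f : M, ι f 0 = 0 → ∃ g : M, ι g = bshV (ι f))
    -- ‖zh‖_M ≥ ‖h‖_M whenever zh ∈ M :
    (hz : ∀ h m : M, ι m = fshV (ι h) → ‖h‖ ≤ ‖m‖)
    -- {g₁, …, g_r} is an orthonormal basis of M ⊖ (M ∩ zH²(𝔻, ℂⁿ)) :
    (g : Fin r → M) (hON : Orthonormal ℂ g)
    (hgmem : ∀ i, g i ∈ ((zH2V n).comap ι)ᗮ)
    (hgspan : Submodule.span ℂ (Set.range g) = ((zH2V n).comap ι)ᗮ) :
    ∃ N : Submodule ℂ (H2V r),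
      -- N = {f ∈ H²(𝔻, ℂ^r) : Gf ∈ M}
      (N : Set (H2V r)) = {f : H2V r | ∃ m : M, GRel ι g f m} ∧
      -- N is invariant under the backward shift
      (∀ f ∈ N, bshV f ∈ N) ∧
      -- 𝒢 : N → M, f ↦ Gf is a bijection (each h ∈ M is Gf for a unique f, and
      -- Gf determines a unique element of M)
      (∀ m : M, ∃! f : H2V r, GRel ι g f m) ∧
      (∀ (f : H2V r) (m m' : M), GRel ι g f m → GRel ι g f m' → m = m') ∧
      -- ‖h‖_M ≥ ‖f‖₂ whenever h = Gf
      (∀ (f : H2V r) (m : M), GRel ι g f m → ‖f‖ ≤ ‖m‖) := by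
  have key := GRel_iff_CRel ι g
  have hle : ∀ (f : H2V r) (m : M), GRel ι g f m → ‖f‖ ≤ ‖m‖ := by
    intro f m h
    obtain ⟨f', hf', hn⟩ := aux_exists hcontr hnearly hz hON hgspan m
    rw [CRel.unique hinj hnearly hON hgmem ((key f m).1 h) hf']
    exact hn
  refine ⟨{ carrier := {f : H2V r | ∃ m : M, GRel ι g f m}
            add_mem' := ?_
            zero_mem' := ?_
            smul_mem' := ?_ }, rfl, ?_, ?_, ?_, hle⟩
  · rintro f f' ⟨m, h⟩ ⟨m', h'⟩
    exact ⟨m + m', (key _ _).2 (((key _ _).1 h).add ((key _ _).1 h'))⟩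
  · exact ⟨0, (key _ _).2 CRel.zero⟩
  · rintro c f ⟨m, h⟩
    exact ⟨c • m, (key _ _).2 (((key _ _).1 h).smul c)⟩
  · rintro f ⟨m, h⟩
    obtain ⟨m', -, h'⟩ := ((key _ _).1 h).bsh hnearly
    exact ⟨m', (key _ _).2 h'⟩
  · intro m
    obtain ⟨f, hf, -⟩ := aux_exists hcontr hnearly hz hON hgspan m
    exact ⟨f, (key _ _).2 hf, fun f' hf' =>
      CRel.unique hinj hnearly hON hgmem ((key _ _).1 hf') hf⟩
  · intro f m m' h h'
    exact ((key _ _).1 h).inj hinj ((key _ _).1 h')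
end
end

section
/- Let T be a bounded operator on a Hilbert space H with ‖Th‖_H ≥ ‖h‖_H for all h ∈ H. Let M be a Hilbert space contractively contained in H such that h ∈ M whenever Th ∈ M, and ‖Th‖_M ≥ ‖h‖_M whenever Th ∈ M. Let P denote the orthogonal projection of M onto the closed subspace M ∩ TH, let Q = I_M − P, and let R : M → H be the map sending h to the unique element Rh ∈ H with T(Rh) = Ph. Then R maps M into M and is a contraction on M, and for every h ∈ M and every nonnegative integer m: h = Σ_{k=0}^m T^k Q R^k h + T^{m+1} R^{m+1} h, and ‖h‖²_M ≥ Σ_{k=0}^m ‖Q R^k h‖²_M. -/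
/- STATEMENT 5: Let T be a bounded operator on a Hilbert space H with ‖Th‖ ≥ ‖h‖ for all h.
Let M be a Hilbert space contractively contained in H (via the injective linear inclusion ι)
such that h ∈ M whenever Th ∈ M, and ‖Th‖_M ≥ ‖h‖_M whenever Th ∈ M.  Let P be the orthogonal
projection of M onto the closed subspace M ∩ TH and Q = I - P.  Then the map R (defined by
T(Rh) = Ph) maps M into M, is a contraction on M, and for every h ∈ M and every m ≥ 0:
h = Σ_{k=0}^m T^k Q R^k h + T^{m+1} R^{m+1} h  and  ‖h‖²_M ≥ Σ_{k=0}^m ‖Q R^k h‖²_M. -/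
theorem stmt5
    (H : Type*) [NormedAddCommGroup H] [InnerProductSpace ℂ H] [CompleteSpace H]
    (M : Type*) [NormedAddCommGroup M] [InnerProductSpace ℂ M] [CompleteSpace M]
    (T : H →L[ℂ] H) (hT : ∀ h : H, ‖h‖ ≤ ‖T h‖)
    (ι : M →ₗ[ℂ] H) (hinj : Function.Injective ι)
    (hcontr : ∀ m : M, ‖ι m‖ ≤ ‖m‖)
    -- Th ∈ M → h ∈ M :
    (hnearly : ∀ h : H, (∃ m : M, ι m = T h) → ∃ m : M, ι m = h)
    -- ‖Th‖_M ≥ ‖h‖_M whenever Th ∈ M :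
    (hnorm : ∀ m m' : M, ι m = T (ι m') → ‖m'‖ ≤ ‖m‖)
    -- P is the orthogonal projection of M onto K := M ∩ TH :
    (P : M →ₗ[ℂ] M)
    (hPmem : ∀ m : M, P m ∈ (LinearMap.range (T : H →ₗ[ℂ] H)).comap ι)
    (hPfix : ∀ m ∈ (LinearMap.range (T : H →ₗ[ℂ] H)).comap ι, P m = m)
    (hPorth : ∀ m : M, m - P m ∈ ((LinearMap.range (T : H →ₗ[ℂ] H)).comap ι)ᗮ) :
    -- R maps M into M (T(Rh) = Ph), R is a contraction on M, and the decomposition holds: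
    ∃ R : M → M,
      (∀ m : M, T (ι (R m)) = ι (P m)) ∧
      (∀ m : M, ‖R m‖ ≤ ‖m‖) ∧
      (∀ h : M, ∀ m : ℕ,
        ι h = (∑ k ∈ Finset.range (m + 1), (T ^ k) (ι (R^[k] h - P (R^[k] h))))
                + (T ^ (m + 1)) (ι (R^[m + 1] h)) ∧
        ∑ k ∈ Finset.range (m + 1), ‖R^[k] h - P (R^[k] h)‖ ^ 2 ≤ ‖h‖ ^ 2) := by
  have hpyth : ∀ m : M, ‖m‖ ^ 2 = ‖P m‖ ^ 2 + ‖m - P m‖ ^ 2 := by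
    intro m
    have h0 : inner ℂ (P m) (m - P m) = 0 :=
      (Submodule.mem_orthogonal _ _).1 (hPorth m) _ (hPmem m)
    have h1 := norm_add_sq_eq_norm_sq_add_norm_sq_of_inner_eq_zero (P m) (m - P m) h0
    rw [add_sub_cancel] at h1
    nlinarith [h1]
  have hex : ∀ m : M, ∃ r : M, T (ι r) = ι (P m) := by
    intro m
    obtain ⟨x, hx⟩ := hPmem m
    have hx' : T x = ι (P m) := hx
    obtain ⟨r, hr⟩ := hnearly x ⟨P m, hx'.symm⟩
    exact ⟨r, by rw [hr, hx']⟩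
  choose R hR using hex
  have hRP : ∀ m : M, ‖R m‖ ^ 2 ≤ ‖P m‖ ^ 2 := fun m =>
    pow_le_pow_left₀ (norm_nonneg _) (hnorm (P m) (R m) (hR m).symm) 2
  have hstep : ∀ m : M, ‖m - P m‖ ^ 2 + ‖R m‖ ^ 2 ≤ ‖m‖ ^ 2 := by
    intro m
    linarith [hpyth m, hRP m]
  have key1 : ∀ (h : M) (n : ℕ),
      ι h = (∑ k ∈ Finset.range n, (T ^ k) (ι (R^[k] h - P (R^[k] h))))
        + (T ^ n) (ι (R^[n] h)) := by
    intro h n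
    induction n with
    | zero => simp
    | succ n ih =>
      have e : (T ^ (n + 1)) (ι (R^[n + 1] h)) = (T ^ n) (ι (P (R^[n] h))) := by
        rw [pow_succ, Function.iterate_succ_apply', ← hR]
        rfl
      rw [Finset.sum_range_succ, e, add_assoc, ← map_add, ← map_add, sub_add_cancel]
      exact ih
  have key2 : ∀ (h : M) (n : ℕ),
      ∑ k ∈ Finset.range n, ‖R^[k] h - P (R^[k] h)‖ ^ 2 + ‖R^[n] h‖ ^ 2 ≤ ‖h‖ ^ 2 := by
    intro h n
    induction n with
    | zero => simp
    | succ n ih =>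
      rw [Finset.sum_range_succ, Function.iterate_succ_apply']
      linarith [hstep (R^[n] h)]
  refine ⟨R, hR, ?_, ?_⟩
  · intro m
    refine le_of_pow_le_pow_left₀ two_ne_zero (norm_nonneg _) ?_
    linarith [hstep m, sq_nonneg ‖m - P m‖]
  · intro h m
    exact ⟨key1 h (m + 1), by linarith [key2 h (m + 1), sq_nonneg ‖R^[m + 1] h‖]⟩
end

section
/- Let H be a Hilbert space and T a bounded operator on H with ‖Th‖_H ≥ ‖h‖_H for all h ∈ H. Let M be a Hilbert space contractively contained in H, and let F be a finite-dimensional subspace of H with M ∩ F = {0}, such that Th ∈ M implies h ∈ M + F, and ‖Th‖_M ≥ ‖h‖_⊕ whenever Th ∈ M, where M ⊕ F is the Hilbert space M + F with norm ‖a + b‖²_⊕ = ‖a‖²_M + ‖b‖²_H for a ∈ M, b ∈ F. Let P, Q, L be the orthogonal projections of M ⊕ F onto M ∩ TH, onto M ⊖ (M ∩ TH), and onto F respectively, and let R : M ⊕ F → H be the map with T(Rg) = Pg for all g ∈ M ⊕ F. Then R maps M ⊕ F into M ⊕ F and is a contraction on M ⊕ F, and for every h ∈ M and every nonnegative integer m: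 h = Σ_{k=0}^m T^k Q R^k h + T^{m+1} R^{m+1} h + T Σ_{k=1}^m T^{k−1} L R^k h, and ‖h‖²_M ≥ Σ_{k=0}^m ‖Q R^k h‖²_M + Σ_{k=1}^m ‖L R^k h‖²_H. -/
noncomputable section
set_option synthInstance.maxHeartbeats 1000000
set_option maxHeartbeats 1000000

/-- The Hilbert space `M ⊕ F` with norm `‖(a, b)‖² = ‖a‖² + ‖b‖²`. -/
abbrev DSp (M F : Type*) := WithLp 2 (M × F)

/-- The embedding of `M ⊕ F` into `H`, `(m, v) ↦ ι m + v`. -/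
def jmap {H : Type*} [NormedAddCommGroup H] [InnerProductSpace ℂ H]
    {M : Type*} [NormedAddCommGroup M] [InnerProductSpace ℂ M]
    (ι : M →ₗ[ℂ] H) (F : Submodule ℂ H) (d : DSp M ↥F) : H :=
  ι (WithLp.equiv 2 (M × ↥F) d).1 + ((WithLp.equiv 2 (M × ↥F) d).2 : H)

/-- The canonical embedding of `M` into `M ⊕ F`, `m ↦ (m, 0)`. -/
def embD {M F : Type*} [NormedAddCommGroup M] [NormedAddCommGroup F] (m : M) : DSp M F :=
  (WithLp.equiv 2 (M × F)).symm (m, 0)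

/-- The copy of `M` inside `M ⊕ F`. -/
def Mcopy {H : Type*} [NormedAddCommGroup H] [InnerProductSpace ℂ H]
    {M : Type*} [NormedAddCommGroup M] [InnerProductSpace ℂ M]
    (F : Submodule ℂ H) : Submodule ℂ (DSp M ↥F) :=
  Submodule.comap ((LinearMap.snd ℂ M ↥F).comp
    (WithLp.linearEquiv 2 ℂ (M × ↥F)).toLinearMap) ⊥

/-- The copy of `F` inside `M ⊕ F`. -/
def Fcopy {H : Type*} [NormedAddCommGroup H] [InnerProductSpace ℂ H]
    {M : Type*} [NormedAddCommGroup M] [InnerProductSpace ℂ M]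
    (F : Submodule ℂ H) : Submodule ℂ (DSp M ↥F) :=
  Submodule.comap ((LinearMap.fst ℂ M ↥F).comp
    (WithLp.linearEquiv 2 ℂ (M × ↥F)).toLinearMap) ⊥

/-- The subspace `M ∩ TH` of `M ⊕ F`: pairs `(m, 0)` with `ι m` in the range of `T`. -/
def KTH {H : Type*} [NormedAddCommGroup H] [InnerProductSpace ℂ H]
    {M : Type*} [NormedAddCommGroup M] [InnerProductSpace ℂ M]
    (ι : M →ₗ[ℂ] H) (F : Submodule ℂ H) (T : H →L[ℂ] H) : Submodule ℂ (DSp M ↥F) :=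
  Mcopy F ⊓ Submodule.comap (ι.comp ((LinearMap.fst ℂ M ↥F).comp
    (WithLp.linearEquiv 2 ℂ (M × ↥F)).toLinearMap)) (LinearMap.range (T : H →ₗ[ℂ] H))

/- STATEMENT 7: Let T be a bounded-below operator on a Hilbert space H, M a Hilbert space
contractively contained in H (via ι), F a finite-dimensional subspace of H with M ∩ F = {0},
such that Th ∈ M implies h ∈ M + F and ‖Th‖_M ≥ ‖h‖_⊕ whenever Th ∈ M.  Let P, Q, L be the
orthogonal projections of M ⊕ F onto M ∩ TH, onto M ⊖ (M ∩ TH), and onto F respectively, and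
let R be the map with T(Rg) = Pg.  Then R maps M ⊕ F into M ⊕ F, is a contraction, and
for every h ∈ M and m ≥ 0:
h = Σ_{k=0}^m T^k Q R^k h + T^{m+1} R^{m+1} h + T Σ_{k=1}^m T^{k-1} L R^k h, and
‖h‖²_M ≥ Σ_{k=0}^m ‖Q R^k h‖²_M + Σ_{k=1}^m ‖L R^k h‖²_H. -/
theorem stmt7
    (H : Type*) [NormedAddCommGroup H] [InnerProductSpace ℂ H] [CompleteSpace H]
    (M : Type*) [NormedAddCommGroup M] [InnerProductSpace ℂ M] [CompleteSpace M]
    (T : H →L[ℂ] H) (hT : ∀ h : H, ‖h‖ ≤ ‖T h‖)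
    (ι : M →ₗ[ℂ] H) (hinj : Function.Injective ι)
    (hcontr : ∀ m : M, ‖ι m‖ ≤ ‖m‖)
    (F : Submodule ℂ H) [FiniteDimensional ℂ ↥F]
    -- M ∩ F = {0} :
    (hMF : LinearMap.range ι ⊓ F = ⊥)
    -- Th ∈ M → h ∈ M + F :
    (hnearly : ∀ h : H, (∃ m : M, ι m = T h) → ∃ (m : M) (v : ↥F), ι m + ↑v = h)
    -- ‖Th‖_M ≥ ‖h‖_⊕ whenever Th ∈ M :
    (hnorm : ∀ (m m' : M) (v : ↥F), ι m = T (ι m' + ↑v) → ‖m'‖ ^ 2 + ‖v‖ ^ 2 ≤ ‖m‖ ^ 2)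
    -- P : orthogonal projection of M ⊕ F onto M ∩ TH :
    (P : DSp M ↥F →ₗ[ℂ] DSp M ↥F)
    (hPmem : ∀ d, P d ∈ KTH ι F T) (hPfix : ∀ d ∈ KTH ι F T, P d = d)
    (hPorth : ∀ d, d - P d ∈ (KTH ι F T)ᗮ)
    -- Q : orthogonal projection of M ⊕ F onto M ⊖ (M ∩ TH) :
    (Q : DSp M ↥F →ₗ[ℂ] DSp M ↥F)
    (hQmem : ∀ d, Q d ∈ Mcopy F ⊓ (KTH ι F T)ᗮ)
    (hQfix : ∀ d ∈ Mcopy F ⊓ (KTH ι F T)ᗮ, Q d = d)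
    (hQorth : ∀ d, d - Q d ∈ (Mcopy F ⊓ (KTH ι F T)ᗮ)ᗮ)
    -- L : orthogonal projection of M ⊕ F onto F :
    (L : DSp M ↥F →ₗ[ℂ] DSp M ↥F)
    (hLmem : ∀ d, L d ∈ Fcopy F) (hLfix : ∀ d ∈ Fcopy F, L d = d)
    (hLorth : ∀ d, d - L d ∈ (Fcopy F)ᗮ)
    -- R : the map with T(Rg) = Pg :
    (R : DSp M ↥F → H) (hR : ∀ d, T (R d) = jmap ι F (P d)) :
    -- R maps M ⊕ F into M ⊕ F, is a contraction, and the decompositions hold :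
    ∃ R' : DSp M ↥F → DSp M ↥F,
      (∀ d, jmap ι F (R' d) = R d) ∧
      (∀ d, ‖R' d‖ ≤ ‖d‖) ∧
      (∀ (h : M) (m : ℕ),
        ι h = (∑ k ∈ Finset.range (m + 1),
                 (T ^ k) (jmap ι F (Q (R'^[k] (embD h)))))
              + (T ^ (m + 1)) (jmap ι F (R'^[m + 1] (embD h)))
              + T (∑ k ∈ Finset.range m,
                 (T ^ k) (jmap ι F (L (R'^[k + 1] (embD h))))) ∧
        (∑ k ∈ Finset.range (m + 1), ‖Q (R'^[k] (embD h))‖ ^ 2)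
          + (∑ k ∈ Finset.range m, ‖L (R'^[k + 1] (embD h))‖ ^ 2) ≤ ‖h‖ ^ 2) := by
  have memM : ∀ d : DSp M ↥F, d ∈ Mcopy (M := M) F ↔ d.snd = 0 := by
    intro d; simp [Mcopy]
  have memF : ∀ d : DSp M ↥F, d ∈ Fcopy (M := M) F ↔ d.fst = 0 := by
    intro d; simp [Fcopy]
  have hjdef : ∀ d : DSp M ↥F, jmap ι F d = ι d.fst + (d.snd : H) := fun d => rfl
  have hjadd : ∀ a b : DSp M ↥F, jmap ι F (a + b) = jmap ι F a + jmap ι F b := by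
    intro a b
    simp only [hjdef, WithLp.add_fst, WithLp.add_snd, map_add, Submodule.coe_add]
    abel
  have hnsq : ∀ d : DSp M ↥F, ‖d‖ ^ 2 = ‖d.fst‖ ^ 2 + ‖d.snd‖ ^ 2 := fun d =>
    WithLp.prod_norm_sq_eq_of_L2 d
  have hMFo : ∀ a ∈ Mcopy (M := M) F, ∀ b ∈ Fcopy (M := M) F, inner ℂ a b = 0 := by
    intro a ha b hb
    rw [memM] at ha
    rw [memF] at hb
    simp [WithLp.prod_inner_apply, ha, hb]
  have hKM : ∀ a ∈ KTH ι F T, a ∈ Mcopy (M := M) F := fun a ha => ha.1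
  -- orthogonal complement of F is M
  have hFM : ∀ d ∈ (Fcopy (M := M) F)ᗮ, d ∈ Mcopy (M := M) F := by
    intro d hd
    rw [memM]
    have h1 := (Submodule.mem_orthogonal _ _).1 hd (WithLp.toLp 2 ((0 : M), d.snd)) (by
      rw [memF]; rfl)
    simp [WithLp.prod_inner_apply] at h1
    exact h1
  -- decomposition
  have hQ0 : ∀ y ∈ (Mcopy F ⊓ (KTH ι F T)ᗮ)ᗮ, Q y = 0 := by
    intro y hy
    have h1 : Q y ∈ (Mcopy F ⊓ (KTH ι F T)ᗮ)ᗮ := by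
      have := Submodule.sub_mem _ hy (hQorth y)
      simpa using this
    exact inner_self_eq_zero.1 ((Submodule.mem_orthogonal _ _).1 h1 _ (hQmem y))
  have hdec : ∀ d, d = P d + Q d + L d := by
    intro d
    have hx : d - L d - P d ∈ Mcopy F ⊓ (KTH ι F T)ᗮ := by
      refine ⟨Submodule.sub_mem _ (hFM _ (hLorth d)) (hKM _ (hPmem d)), ?_⟩
      have h1 : L d ∈ (KTH ι F T)ᗮ := by
        rw [Submodule.mem_orthogonal]
        intro u hu
        exact hMFo u (hKM u hu) _ (hLmem d)
      have := Submodule.sub_mem _ (hPorth d) h1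
      rwa [sub_right_comm] at this
    have h1 := hQfix _ hx
    have hP0 : Q (P d) = 0 := by
      apply hQ0
      rw [Submodule.mem_orthogonal]
      intro u hu
      exact (Submodule.mem_orthogonal' _ _).1 hu.2 _ (hPmem d)
    have hL0 : Q (L d) = 0 := by
      apply hQ0
      rw [Submodule.mem_orthogonal]
      intro u hu
      exact hMFo u hu.1 _ (hLmem d)
    rw [map_sub, map_sub, hP0, hL0, sub_zero, sub_zero] at h1
    rw [h1]; abel
  have hpyth : ∀ d, ‖d‖ ^ 2 = ‖P d‖ ^ 2 + ‖Q d‖ ^ 2 + ‖L d‖ ^ 2 := by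
    intro d
    have h1 : inner ℂ (P d + Q d) (L d) = 0 :=
      hMFo _ (Submodule.add_mem _ (hKM _ (hPmem d)) (hQmem d).1) _ (hLmem d)
    have h2 : inner ℂ (P d) (Q d) = 0 :=
      (Submodule.mem_orthogonal _ _).1 (hQmem d).2 _ (hPmem d)
    have e1 := norm_add_sq_eq_norm_sq_add_norm_sq_of_inner_eq_zero _ _ h1
    have e2 := norm_add_sq_eq_norm_sq_add_norm_sq_of_inner_eq_zero _ _ h2
    rw [← hdec d] at e1
    nlinarith [e1, e2]
  have hex : ∀ d, ∃ r : DSp M ↥F, jmap ι F r = R d := by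
    intro d
    have h0 := (memM _).1 (hKM _ (hPmem d))
    obtain ⟨m', v, hv⟩ := hnearly (R d) ⟨(P d).fst, by rw [hR, hjdef, h0]; simp⟩
    exact ⟨WithLp.toLp 2 (m', v), hv⟩
  choose R' hR' using hex
  have hTR : ∀ d, T (jmap ι F (R' d)) = jmap ι F (P d) := fun d => by rw [hR', hR]
  have hRP : ∀ d, ‖R' d‖ ^ 2 ≤ ‖P d‖ ^ 2 := by
    intro d
    have h0 := (memM _).1 (hKM _ (hPmem d))
    have h1 := hnorm (P d).fst (R' d).fst (R' d).snd (by
      rw [← hjdef, hTR, hjdef, h0]; simp)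
    rw [hnsq, hnsq (P d), h0]
    simpa using h1
  have hstep : ∀ d, jmap ι F d = jmap ι F (Q d) + T (jmap ι F (R' d)) + jmap ι F (L d) := by
    intro d
    conv_lhs => rw [hdec d]
    rw [hjadd, hjadd, hTR]
    abel
  have hgen : ∀ (d : DSp M ↥F) (m : ℕ), jmap ι F d =
      (∑ k ∈ Finset.range m, (T ^ k) (jmap ι F (Q (R'^[k] d))))
      + (T ^ m) (jmap ι F (R'^[m] d))
      + ∑ k ∈ Finset.range m, (T ^ k) (jmap ι F (L (R'^[k] d))) := by
    intro d m
    induction m with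
    | zero => simp
    | succ m ih =>
      rw [Finset.sum_range_succ, Finset.sum_range_succ]
      have h1 : (T ^ m) (jmap ι F (R'^[m] d)) = (T ^ m) (jmap ι F (Q (R'^[m] d)))
          + (T ^ (m + 1)) (jmap ι F (R'^[m + 1] d)) + (T ^ m) (jmap ι F (L (R'^[m] d))) := by
        rw [hstep (R'^[m] d), map_add, map_add, Function.iterate_succ_apply', pow_succ]
        rfl
      rw [h1] at ih
      refine ih.trans ?_
      abel
  have hgenN : ∀ (d : DSp M ↥F) (m : ℕ),
      (∑ k ∈ Finset.range m, ‖Q (R'^[k] d)‖ ^ 2) + (∑ k ∈ Finset.range m, ‖L (R'^[k] d)‖ ^ 2)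
       + ‖R'^[m] d‖ ^ 2 ≤ ‖d‖ ^ 2 := by
    intro d m
    induction m with
    | zero => simp
    | succ m ih =>
      rw [Finset.sum_range_succ, Finset.sum_range_succ, Function.iterate_succ_apply']
      have h1 := hpyth (R'^[m] d)
      have h2 := hRP (R'^[m] d)
      linarith
  refine ⟨R', hR', ?_, ?_⟩
  · intro d
    have h1 := hpyth d
    have h2 := hRP d
    refine le_of_sq_le_sq ?_ (norm_nonneg _)
    nlinarith [sq_nonneg ‖Q d‖, sq_nonneg ‖L d‖]
  · intro h m
    have hL0 : L (embD h) = 0 := by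
      have h1 : (embD h : DSp M ↥F) ∈ Mcopy (M := M) F := by
        rw [memM]; rfl
      have h2 := (Submodule.mem_orthogonal _ _).1 (hLorth (embD h)) _ (hLmem (embD h))
      have h3 := hMFo _ h1 _ (hLmem (embD h))
      rw [inner_sub_right, inner_eq_zero_symm.1 h3, zero_sub, neg_eq_zero] at h2
      exact inner_self_eq_zero.1 h2
    have hj0 : jmap ι F (0 : DSp M ↥F) = 0 := by simp [hjdef]
    have hje : jmap ι F (embD h : DSp M ↥F) = ι h := by simp [hjdef, embD]
    have hne : ‖(embD h : DSp M ↥F)‖ ^ 2 = ‖h‖ ^ 2 := by simp [hnsq, embD]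
    constructor
    · have h1 := hgen (embD h) (m + 1)
      rw [hje, Finset.sum_range_succ' (fun k => (T ^ k) (jmap ι F (L (R'^[k] (embD h)))))] at h1
      rw [Function.iterate_zero_apply, hL0, hj0, map_zero, add_zero] at h1
      rw [map_sum]
      refine h1.trans ?_
      congr 1
      refine Finset.sum_congr rfl fun k _ => ?_
      rw [pow_succ']
      rfl
    · have h1 := hgenN (embD h) (m + 1)
      rw [hne, Finset.sum_range_succ' (fun k => ‖L (R'^[k] (embD h))‖ ^ 2)] at h1
      have h2 := sq_nonneg ‖R'^[m + 1] (embD h : DSp M ↥F)‖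
      have h3 := sq_nonneg ‖L (R'^[0] (embD h : DSp M ↥F))‖
      linarith
end
end

section
/- Let U : H²(𝔻) → H²(𝔻) be the bounded linear operator determined by U(1) = 1, U(z) = √2·z, U(z²) = √2·z², and U(zⁿ) = zⁿ for n ≥ 3. Let M = span{1 + z, z + z²} with the norm ‖f‖_M := ‖Uf‖₂. Then M, with this norm, is a Hilbert space contractively contained in H²(𝔻), M is nearly invariant under the backward shift S*, and ‖zh‖_M ≥ ‖h‖_M whenever zh ∈ M. -/
noncomputable section
open scoped ENNReal

/-- The Hardy space `H²(𝔻)`, identified isometrically with the space of square-summable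
sequences of Taylor coefficients; `lp.single 2 n 1` corresponds to `zⁿ`. -/
abbrev H2 := lp (fun _ : ℕ => ℂ) 2

/-- The backward shift `S*` on `H²(𝔻)`. -/
def bsh (f : H2) : H2 :=
  ⟨fun k => f (k + 1), by
    apply memℓp_gen
    have hf : Summable fun i => ‖f i‖ ^ (2 : ℝ≥0∞).toReal :=
      (memℓp_gen_iff (by norm_num)).1 (lp.memℓp f)
    exact hf.comp_injective (add_left_injective 1)⟩

/-- The forward shift (multiplication by `z`) on `H²(𝔻)`. -/
def fsh (f : H2) : H2 :=
  ⟨fun k => match k with | 0 => 0 | (j + 1) => f j, by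
    apply memℓp_gen
    have hf : Summable fun i => ‖f i‖ ^ (2 : ℝ≥0∞).toReal :=
      (memℓp_gen_iff (by norm_num)).1 (lp.memℓp f)
    apply (summable_nat_add_iff 1).mp
    convert hf using 1⟩

/- STATEMENT 10: Let U be the bounded operator on H²(𝔻) determined by U(1) = 1,
U(z) = √2 z, U(z²) = √2 z², U(zⁿ) = zⁿ (n ≥ 3), and M = span{1 + z, z + z²} with norm
‖f‖_M := ‖Uf‖₂.  Then M with this norm is a Hilbert space contractively contained in H²(𝔻)
(the map f ↦ Uf is injective on M and its image is complete, so (M, ‖U·‖₂) is a Hilbert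
space, and ‖f‖₂ ≤ ‖f‖_M on M), M is nearly S*-invariant, and ‖zh‖_M ≥ ‖h‖_M whenever
zh ∈ M. -/
lemma nrm3 (a b c : ℂ) :
    ‖(a • lp.single 2 0 1 + b • lp.single 2 1 1 + c • lp.single 2 2 1 : H2)‖ ^ 2
      = ‖a‖ ^ 2 + ‖b‖ ^ 2 + ‖c‖ ^ 2 := by
  have h := lp.norm_sum_single (p := 2) (E := fun _ : ℕ => ℂ) (by norm_num)
    (fun i : ℕ => if i = 0 then a else if i = 1 then b else c) (Finset.range 3)
  simp only [Finset.sum_range_succ, Finset.sum_range_zero] at h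
  norm_num at h
  rw [← h]
  simp only [← lp.single_smul, smul_eq_mul, mul_one]

lemma memM (f : H2) (hf : f ∈ Submodule.span ℂ
      {(lp.single 2 0 1 + lp.single 2 1 1 : H2), lp.single 2 1 1 + lp.single 2 2 1}) :
    ∃ a b : ℂ, f = a • lp.single 2 0 1 + (a + b) • lp.single 2 1 1 + b • lp.single 2 2 1 := by
  obtain ⟨a, b, rfl⟩ := Submodule.mem_span_pair.1 hf
  exact ⟨a, b, by module⟩

lemma coord3 (a b c : ℂ) (k : ℕ) :
    (a • lp.single 2 0 1 + b • lp.single 2 1 1 + c • lp.single 2 2 1 : H2) k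
      = a * (if k = 0 then 1 else 0) + b * (if k = 1 then 1 else 0)
        + c * (if k = 2 then 1 else 0) := by
  have h : (a • lp.single 2 0 1 + b • lp.single 2 1 1 + c • lp.single 2 2 1 : H2) k
      = a * (lp.single 2 0 1 : H2) k + b * (lp.single 2 1 1 : H2) k
        + c * (lp.single 2 2 1 : H2) k := rfl
  rw [h, lp.single_apply, lp.single_apply, lp.single_apply, Pi.single_apply, Pi.single_apply,
    Pi.single_apply]

lemma shift_aux (f h : H2) (hf : f ∈ Submodule.span ℂ
      {(lp.single 2 0 1 + lp.single 2 1 1 : H2), lp.single 2 1 1 + lp.single 2 2 1})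
    (h0 : f 0 = 0) (hs : ∀ k, h k = f (k + 1)) :
    ∃ b : ℂ, f = (0 : ℂ) • lp.single 2 0 1 + b • lp.single 2 1 1 + b • lp.single 2 2 1 ∧
      h = b • lp.single 2 0 1 + b • lp.single 2 1 1 + (0 : ℂ) • lp.single 2 2 1 := by
  obtain ⟨a, b, rfl⟩ := memM f hf
  have ha : a = 0 := by
    rw [coord3] at h0
    simpa using h0
  subst ha
  refine ⟨b, by simp, ?_⟩
  ext k
  rw [hs, coord3, coord3]
  simp

theorem stmt10
    (U : H2 →L[ℂ] H2)
    (hU0 : U (lp.single 2 0 1) = lp.single 2 0 1)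
    (hU1 : U (lp.single 2 1 1) = (Real.sqrt 2 : ℂ) • lp.single 2 1 1)
    (hU2 : U (lp.single 2 2 1) = (Real.sqrt 2 : ℂ) • lp.single 2 2 1)
    (hUn : ∀ n : ℕ, 3 ≤ n → U (lp.single 2 n 1) = lp.single 2 n 1)
    (M : Submodule ℂ H2)
    (hM : M = Submodule.span ℂ
      {lp.single 2 0 1 + lp.single 2 1 1, lp.single 2 1 1 + lp.single 2 2 1}) :
    -- (M, ‖U·‖₂) is a Hilbert space:
    Set.InjOn U M ∧ IsComplete (U '' M) ∧
    -- contractively contained in H²(𝔻):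
    (∀ f ∈ M, ‖f‖ ≤ ‖U f‖) ∧
    -- nearly invariant under the backward shift:
    (∀ f ∈ M, f 0 = 0 → bsh f ∈ M) ∧
    -- ‖zh‖_M ≥ ‖h‖_M whenever zh ∈ M:
    (∀ h : H2, fsh h ∈ M → h ∈ M ∧ ‖U h‖ ≤ ‖U (fsh h)‖) := by
  have hUf : ∀ a b c : ℂ,
      U (a • lp.single 2 0 1 + b • lp.single 2 1 1 + c • lp.single 2 2 1) =
        a • lp.single 2 0 1 + (b * (Real.sqrt 2 : ℂ)) • lp.single 2 1 1
          + (c * (Real.sqrt 2 : ℂ)) • lp.single 2 2 1 := by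
    intro a b c
    rw [map_add, map_add, map_smul, map_smul, map_smul, hU0, hU1, hU2]
    module
  have hn : ∀ a b c : ℂ,
      ‖U (a • lp.single 2 0 1 + b • lp.single 2 1 1 + c • lp.single 2 2 1)‖ ^ 2 =
        ‖a‖ ^ 2 + 2 * ‖b‖ ^ 2 + 2 * ‖c‖ ^ 2 := by
    intro a b c
    have h2 : ‖(Real.sqrt 2 : ℂ)‖ ^ 2 = 2 := by
      rw [Complex.norm_real, Real.norm_eq_abs, sq_abs, Real.sq_sqrt (by norm_num)]
    rw [hUf, nrm3, norm_mul, norm_mul, mul_pow, mul_pow, h2]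
    ring
  have hc : ∀ f ∈ M, ‖f‖ ≤ ‖U f‖ := by
    intro f hf
    subst hM
    obtain ⟨a, b, rfl⟩ := memM f hf
    refine (sq_le_sq₀ (norm_nonneg _) (norm_nonneg _)).1 ?_
    rw [hn, nrm3]
    nlinarith [sq_nonneg ‖a + b‖, sq_nonneg ‖b‖]
  have hmem : ∀ b : ℂ,
      (b • lp.single 2 0 1 + b • lp.single 2 1 1 + (0 : ℂ) • lp.single 2 2 1 : H2) ∈ M := by
    intro b
    rw [hM]
    exact Submodule.mem_span_pair.2 ⟨b, 0, by module⟩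
  refine ⟨?_, ?_, hc, ?_, ?_⟩
  · intro f hf g hg hfg
    have h := hc (f - g) (M.sub_mem hf hg)
    rw [map_sub, hfg, sub_self, norm_zero] at h
    exact sub_eq_zero.1 (norm_le_zero_iff.1 h)
  · have : FiniteDimensional ℂ M := by
      rw [hM]
      exact FiniteDimensional.span_of_finite ℂ (Set.toFinite _)
    have h := Submodule.complete_of_finiteDimensional (M.map (U : H2 →ₗ[ℂ] H2))
    simpa using h
  · intro f hf h0
    obtain ⟨b, -, h⟩ := shift_aux f (bsh f) (hM ▸ hf) h0 (fun _ => rfl)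
    rw [h]
    exact hmem b
  · intro h hf
    obtain ⟨b, h1, h2⟩ := shift_aux (fsh h) h (hM ▸ hf) rfl (fun _ => rfl)
    refine ⟨h2 ▸ hmem b, ?_⟩
    refine (sq_le_sq₀ (norm_nonneg _) (norm_nonneg _)).1 ?_
    rw [h1, hn]
    conv_lhs => rw [h2]
    rw [hn]
    simp
    nlinarith [sq_nonneg ‖b‖]
end
end

section
/- Let U : H²(𝔻) → H²(𝔻) be the bounded linear operator determined by U(1) = 1, U(z) = √2·z, U(z²) = √2·z², and U(zⁿ) = zⁿ for n ≥ 3, and let M = span{1 + z, z + z²} with norm ‖f‖_M := ‖Uf‖₂. Then M ∩ zH²(𝔻) = span{z + z²}; the orthogonal complement M ⊖ (M ∩ zH²(𝔻)) in M is spanned by g(z) = (z − 2)(z + 1)/(2√2), which satisfies ‖g‖_M = 1; the function f(z) = 2√2/(z − 2) belongs to H²(𝔻) and satisfies 1 + z = g·f pointwise on 𝔻; and ‖1 + z‖²_M = 3 while ‖f‖²₂ = 8/3, so that ‖1 + z‖_M > ‖f‖₂ (the norm equality of Hitt's theorem fails in the contractively contained setting). -/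
noncomputable section
open scoped ENNReal

/-- The value at `z ∈ 𝔻` of `f ∈ H²(𝔻)`. -/
def ev (f : H2) (z : ℂ) : ℂ := ∑' m, f m * z ^ m

/-- `1 + z` as an element of `H²(𝔻)`. -/
def p1 : H2 := lp.single 2 0 1 + lp.single 2 1 1

/-- `z + z²` as an element of `H²(𝔻)`. -/
def p2 : H2 := lp.single 2 1 1 + lp.single 2 2 1

/-- `g(z) = (z - 2)(z + 1)/(2√2) = (z² - z - 2)/(2√2)` as an element of `H²(𝔻)`. -/
def gg : H2 :=
  ((2 * Real.sqrt 2 : ℝ) : ℂ)⁻¹ •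
    (lp.single 2 0 (-2) + lp.single 2 1 (-1) + lp.single 2 2 1)

/-- `f(z) = 2√2/(z - 2) = -√2 Σ_n (z/2)ⁿ` as an element of `H²(𝔻)`
(in particular, this function belongs to `H²(𝔻)`). -/
def ff : H2 :=
  ⟨fun n => -(Real.sqrt 2 : ℂ) * (2 : ℂ)⁻¹ ^ n, by
    apply memℓp_gen
    have key : ∀ n : ℕ, ‖-(Real.sqrt 2 : ℂ) * (2 : ℂ)⁻¹ ^ n‖ ^ (2 : ℝ≥0∞).toReal
        = 2 * ((1 : ℝ) / 4) ^ n := by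
      intro n
      have h1 : ‖-(Real.sqrt 2 : ℂ) * (2 : ℂ)⁻¹ ^ n‖ = Real.sqrt 2 * (1 / 2 : ℝ) ^ n := by
        rw [norm_mul, norm_neg, norm_pow]
        simp [Complex.norm_real, abs_of_nonneg (Real.sqrt_nonneg 2)]
      have h2 : ((2 : ℝ≥0∞).toReal) = (2 : ℕ) := by norm_num
      rw [h1, h2, Real.rpow_natCast, mul_pow, Real.sq_sqrt (by norm_num : (0:ℝ) ≤ 2),
        ← pow_mul, mul_comm n 2, pow_mul]
      norm_num
    have hgeo : Summable fun n : ℕ => (2 : ℝ) * ((1 : ℝ) / 4) ^ n :=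
      (summable_geometric_of_lt_one (by norm_num) (by norm_num)).mul_left 2
    exact (summable_congr key).2 hgeo⟩

/-- Polynomials of degree at most two. -/
def TT (a b c : ℂ) : H2 := a • lp.single 2 0 1 + b • lp.single 2 1 1 + c • lp.single 2 2 1

theorem TT_inner (a b c x y w : ℂ) : inner ℂ (TT a b c) (TT x y w) =
    x * (starRingEnd ℂ) a + y * (starRingEnd ℂ) b + w * (starRingEnd ℂ) c := by
  simp [TT, inner_add_left, inner_smul_left, lp.inner_single_left, lp.single_apply, Pi.single_apply]

theorem TT_apply (a b c : ℂ) (n : ℕ) : (TT a b c) n =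
    a * (if n = 0 then 1 else 0) + b * (if n = 1 then 1 else 0) + c * (if n = 2 then 1 else 0) := by
  have h (k : ℕ) : (lp.single 2 k 1 : H2) n = (if n = k then 1 else 0 : ℂ) := by
    rw [lp.single_apply, Pi.single_apply]
  rw [← h, ← h, ← h]
  rfl

theorem TT_norm (a b c : ℂ) : ‖TT a b c‖ ^ 2 = ‖a‖ ^ 2 + ‖b‖ ^ 2 + ‖c‖ ^ 2 := by
  have h := TT_inner a b c a b c
  rw [inner_self_eq_norm_sq_to_K, Complex.mul_conj', Complex.mul_conj', Complex.mul_conj'] at h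
  apply Complex.ofReal_injective
  push_cast
  exact h

theorem TT_zero (a b c : ℂ) : (TT a b c) 0 = a := by
  simp [TT_apply]

theorem TT_ev (a b c z : ℂ) : ev (TT a b c) z = a + b * z + c * z ^ 2 := by
  unfold ev
  rw [tsum_eq_sum (s := Finset.range 3)]
  · simp [Finset.sum_range_succ, TT_apply]
  · intro n hn
    have : 3 ≤ n := by simpa using hn
    have h0 : n ≠ 0 := by omega
    have h1 : n ≠ 1 := by omega
    have h2 : n ≠ 2 := by omega
    simp [TT_apply, h0, h1, h2]

theorem p1_TT : p1 = TT 1 1 0 := by simp [p1, TT]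

theorem p2_TT : p2 = TT 0 1 1 := by simp [p2, TT]

theorem comb_TT (a b : ℂ) : a • p1 + b • p2 = TT a (a + b) b := by
  simp only [p1, p2, TT]; module

theorem gg_eq : gg = ((2 * Real.sqrt 2 : ℝ) : ℂ)⁻¹ • TT (-2) (-1) 1 := by
  have h (n : ℕ) (c : ℂ) : (lp.single 2 n c : H2) = c • lp.single 2 n 1 := by
    rw [← lp.single_smul]; simp
  rw [gg, TT, h 0 (-2), h 1 (-1), one_smul]

theorem TT_smul (k a b c : ℂ) : k • TT a b c = TT (k * a) (k * b) (k * c) := by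
  simp only [TT]; module

theorem ff_norm : ‖ff‖ ^ 2 = 8 / 3 := by
  have h := lp.norm_rpow_eq_tsum (p := 2) (by norm_num) ff
  have key : ∀ n : ℕ, ‖ff n‖ ^ (2 : ℝ≥0∞).toReal = 2 * ((1 : ℝ) / 4) ^ n := by
    intro n
    have h1 : ‖ff n‖ = Real.sqrt 2 * (1 / 2 : ℝ) ^ n := by
      change ‖-(Real.sqrt 2 : ℂ) * (2 : ℂ)⁻¹ ^ n‖ = _
      rw [norm_mul, norm_neg, norm_pow]
      simp [Complex.norm_real, abs_of_nonneg (Real.sqrt_nonneg 2)]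
    have h2 : ((2 : ℝ≥0∞).toReal) = (2 : ℕ) := by norm_num
    rw [h1, h2, Real.rpow_natCast, mul_pow, Real.sq_sqrt (by norm_num : (0:ℝ) ≤ 2),
      ← pow_mul, mul_comm n 2, pow_mul]
    norm_num
  rw [tsum_congr key, tsum_mul_left, tsum_geometric_of_lt_one (by norm_num) (by norm_num)] at h
  have h2 : ((2 : ℝ≥0∞).toReal) = (2 : ℕ) := by norm_num
  rw [h2, Real.rpow_natCast] at h
  rw [h]; norm_num

theorem ff_ev (z : ℂ) (hz : ‖z‖ < 1) : ev ff z = -(Real.sqrt 2 : ℂ) * (1 - z / 2)⁻¹ := by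
  have : ∀ n : ℕ, ff n * z ^ n = -(Real.sqrt 2 : ℂ) * (z / 2) ^ n := by
    intro n
    change -(Real.sqrt 2 : ℂ) * (2 : ℂ)⁻¹ ^ n * z ^ n = _
    rw [div_eq_mul_inv, mul_pow]; ring
  rw [ev, tsum_congr this, tsum_mul_left, tsum_geometric_of_norm_lt_one]
  rw [norm_div]; norm_num; linarith

/- STATEMENT 11: With U and M = span{1 + z, z + z²} (norm ‖f‖_M = ‖Uf‖₂) as in Example 3.7:
M ∩ zH²(𝔻) = span{z + z²}; M ⊖ (M ∩ zH²(𝔻)) is spanned by g(z) = (z-2)(z+1)/(2√2), which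
has ‖g‖_M = 1; f(z) = 2√2/(z-2) ∈ H²(𝔻) satisfies 1 + z = g·f on 𝔻; and ‖1+z‖²_M = 3,
‖f‖²₂ = 8/3, so ‖1+z‖_M > ‖f‖₂. -/
theorem stmt11
    (U : H2 →L[ℂ] H2)
    (hU0 : U (lp.single 2 0 1) = lp.single 2 0 1)
    (hU1 : U (lp.single 2 1 1) = (Real.sqrt 2 : ℂ) • lp.single 2 1 1)
    (hU2 : U (lp.single 2 2 1) = (Real.sqrt 2 : ℂ) • lp.single 2 2 1)
    (hUn : ∀ n : ℕ, 3 ≤ n → U (lp.single 2 n 1) = lp.single 2 n 1)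
    (M : Submodule ℂ H2)
    (hM : M = Submodule.span ℂ {p1, p2}) :
    -- M ∩ zH²(𝔻) = span{z + z²} :
    {f : H2 | f ∈ M ∧ f 0 = 0} = (Submodule.span ℂ {p2} : Submodule ℂ H2) ∧
    -- M ⊖ (M ∩ zH²(𝔻)) = span{g} (orthogonality in the inner product of M, which is
    -- ⟪f, h⟫_M = ⟪Uf, Uh⟫₂), and ‖g‖_M = 1 :
    gg ∈ M ∧ ‖U gg‖ = 1 ∧
    {f : H2 | f ∈ M ∧ ∀ h ∈ M, h 0 = 0 → inner (𝕜 := ℂ) (U f) (U h) = 0}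
      = (Submodule.span ℂ {gg} : Submodule ℂ H2) ∧
    -- 1 + z = g·f pointwise on 𝔻 :
    (∀ z ∈ Metric.ball (0 : ℂ) 1, ev p1 z = ev gg z * ev ff z) ∧
    -- ‖1 + z‖²_M = 3, ‖f‖²₂ = 8/3, and ‖1 + z‖_M > ‖f‖₂ :
    ‖U p1‖ ^ 2 = 3 ∧ ‖ff‖ ^ 2 = 8 / 3 ∧ ‖ff‖ < ‖U p1‖ := by
  have hs : (Real.sqrt 2 : ℂ) ^ 2 = 2 := by
    exact_mod_cast Real.sq_sqrt (by norm_num : (0:ℝ) ≤ 2)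
  have hs0 : (Real.sqrt 2 : ℂ) ≠ 0 := by
    intro h; rw [h] at hs; norm_num at hs
  have hsn : ‖(Real.sqrt 2 : ℂ)‖ ^ 2 = 2 := by
    rw [← norm_pow, hs]; norm_num
  have hUT : ∀ a b c : ℂ, U (TT a b c) = TT a (Real.sqrt 2 * b) (Real.sqrt 2 * c) := by
    intro a b c
    simp only [TT, map_add, map_smul, hU0, hU1, hU2]
    module
  have hmem : ∀ x : H2, x ∈ M ↔ ∃ a b : ℂ, TT a (a + b) b = x := by
    intro x
    rw [hM, Submodule.mem_span_pair]
    simp only [comb_TT]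
  have hgT : gg = TT (((2 * Real.sqrt 2 : ℝ) : ℂ)⁻¹ * (-2)) (((2 * Real.sqrt 2 : ℝ) : ℂ)⁻¹ * (-1))
      (((2 * Real.sqrt 2 : ℝ) : ℂ)⁻¹ * 1) := by rw [gg_eq, TT_smul]
  have hgM : gg ∈ M := by
    rw [hmem]
    refine ⟨((2 * Real.sqrt 2 : ℝ) : ℂ)⁻¹ * (-2), ((2 * Real.sqrt 2 : ℝ) : ℂ)⁻¹, ?_⟩
    rw [hgT]
    congr 1 <;> ring
  have hn3 : ‖U p1‖ ^ 2 = 3 := by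
    rw [p1_TT, hUT, TT_norm, norm_mul, mul_pow, hsn]; norm_num
  have hM0 : ∀ x : H2, (x ∈ M ∧ x 0 = 0) ↔ ∃ c : ℂ, c • p2 = x := by
    intro x
    constructor
    · rintro ⟨hx, h0⟩
      obtain ⟨a, b, rfl⟩ := (hmem x).1 hx
      rw [TT_zero] at h0
      subst h0
      refine ⟨b, ?_⟩
      rw [p2_TT, TT_smul]; congr 1 <;> ring
    · rintro ⟨c, rfl⟩
      rw [p2_TT, TT_smul, TT_zero, hmem]
      refine ⟨⟨0, c, ?_⟩, by ring⟩
      congr 1 <;> ring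
  refine ⟨?_, hgM, ?_, ?_, ?_, hn3, ff_norm, ?_⟩
  · ext x
    simp only [Set.mem_setOf_eq, SetLike.mem_coe, Submodule.mem_span_singleton]
    exact hM0 x
  · have h : ‖U gg‖ ^ 2 = 1 := by
      rw [gg_eq, map_smul, norm_smul, mul_pow, hUT, TT_norm, norm_mul, norm_mul, mul_pow, mul_pow,
        hsn, norm_inv, Complex.ofReal_mul, norm_mul, inv_pow, mul_pow, hsn]
      norm_num
    nlinarith [norm_nonneg (U gg)]
  · ext x
    simp only [Set.mem_setOf_eq, SetLike.mem_coe, Submodule.mem_span_singleton]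
    constructor
    · rintro ⟨hx, h⟩
      have h1 := (hM0 p2).2 ⟨1, one_smul _ _⟩
      have h2 := h p2 h1.1 h1.2
      obtain ⟨a, b, rfl⟩ := (hmem x).1 hx
      rw [p2_TT, hUT, hUT, TT_inner] at h2
      simp only [map_mul, map_add, Complex.conj_ofReal] at h2
      have h3 : (starRingEnd ℂ) (a + 2 * b) = 0 := by
        simp only [map_mul, map_add, map_ofNat]
        linear_combination h2 / 2 -
          ((starRingEnd ℂ) a + 2 * (starRingEnd ℂ) b) / 2 * hs
      rw [map_eq_zero] at h3
      have h4 : a = -2 * b := by linear_combination h3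
      subst h4
      refine ⟨b * ((2 * Real.sqrt 2 : ℝ) : ℂ), ?_⟩
      have hne : ((2 * Real.sqrt 2 : ℝ) : ℂ) ≠ 0 := by
        rw [Complex.ofReal_mul]
        exact mul_ne_zero (by norm_num) hs0
      rw [gg_eq, smul_smul, mul_assoc, mul_inv_cancel₀ hne, TT_smul]
      congr 1 <;> ring
    · rintro ⟨c, rfl⟩
      refine ⟨M.smul_mem c hgM, ?_⟩
      intro y hy hy0
      obtain ⟨d, rfl⟩ := (hM0 y).1 ⟨hy, hy0⟩
      rw [gg_eq, smul_smul, map_smul, map_smul, inner_smul_left, inner_smul_right, p2_TT, hUT, hUT,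
        TT_inner]
      simp
  · intro z hz
    have hz1 : ‖z‖ < 1 := by simpa using hz
    rw [p1_TT, hgT, TT_ev, TT_ev, ff_ev z hz1]
    have hz2 : (2 : ℂ) - z ≠ 0 := by
      intro h
      have : z = 2 := by linear_combination -h
      rw [this] at hz1
      norm_num at hz1
    have hz3 : (1 : ℂ) - z / 2 ≠ 0 := by
      intro h
      exact hz2 (by linear_combination 2 * h)
    push_cast
    field_simp
    ring
  · have h := ff_norm
    exact lt_of_pow_lt_pow_left₀ 2 (norm_nonneg _) (by rw [h, hn3]; norm_num)
end
end

section
/- Let 𝒟 be the Dirichlet space of analytic functions f(z) = Σ_{i≥0} a_i z^i on the open unit disc with ‖f‖²_𝒟 = Σ_{i≥0} |a_i|²(i + 1) < ∞. Let θ be a bounded analytic function on 𝔻 with ‖θ‖_∞ = 1 and θ(0) > 0, and let M = θ𝒟 = {θf : f ∈ 𝒟} with norm ‖θf‖_M := ‖f‖_𝒟. Then M is a well-defined Hilbert space contractively contained in H²(𝔻), M is nearly invariant under the backward shift S*, ‖zg‖_M ≥ ‖g‖_M whenever zg ∈ M, and M ⊖ (M ∩ zH²(𝔻)) = span{θ}.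 -/
noncomputable section
open scoped ENNReal
open Filter

/-- The open unit disc. -/
def Disc : Set ℂ := Metric.ball (0 : ℂ) 1

/-- Membership in the Dirichlet space `𝒟`: `Σ |aᵢ|²(i+1) < ∞`. -/
def DirMem (f : H2) : Prop := Summable fun i : ℕ => ‖f i‖ ^ 2 * ((i : ℝ) + 1)

/-- The Dirichlet norm `‖f‖_𝒟 = (Σ |aᵢ|²(i+1))^{1/2}`. -/
def DNorm (f : H2) : ℝ := Real.sqrt (∑' i : ℕ, ‖f i‖ ^ 2 * ((i : ℝ) + 1))

/-- The Dirichlet inner product `⟪f, g⟫_𝒟 = Σ (i+1) conj(aᵢ) bᵢ`. -/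
def DInner (f g : H2) : ℂ := ∑' i : ℕ, ((i : ℂ) + 1) * (starRingEnd ℂ) (f i) * g i

/-- `ThetaRel θ h f` says `h = θ·f` on the disc with `f` in the Dirichlet space,
i.e. `h` is the element `θf` of `M = θ𝒟`, with representative `f`. -/
def ThetaRel (θ : ℂ → ℂ) (h f : H2) : Prop :=
  DirMem f ∧ ∀ z ∈ Disc, ev h z = θ z * ev f z

lemma sq_summable {u : ℕ → ℝ} (h0 : ∀ n, 0 ≤ u n) (hu : Summable u) :
    Summable fun n => u n ^ 2 := by
  have h := (hu.mul_of_nonneg hu h0 h0).comp_injective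
    (i := fun n : ℕ => (n, n)) (fun a b hab => (Prod.mk.inj hab).1)
  simpa [Function.comp_def, sq] using h

lemma key_circle (a b : ℕ → ℂ) (ha : Summable fun n => ‖a n‖) (hb : Summable fun n => ‖b n‖)
    (hab : ∀ w : ℂ, ‖w‖ = 1 → ‖∑' n, a n * w ^ n‖ ≤ ‖∑' n, b n * w ^ n‖) :
    (∑' n, ‖a n‖ ^ 2) ≤ ∑' n, ‖b n‖ ^ 2 := by
  have : Fact ((0 : ℝ) < 1) := ⟨one_pos⟩
  have main : ∀ c : ℕ → ℂ, Summable (fun n => ‖c n‖) → ∃ g : C(AddCircle (1 : ℝ), ℂ),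
      (∀ t, g t = ∑' n, c n * ((AddCircle.toCircle t : Circle) : ℂ) ^ n) ∧
      ‖ContinuousMap.toLp (E := ℂ) 2 AddCircle.haarAddCircle ℂ g‖ ^ 2 = ∑' n, ‖c n‖ ^ 2 := by
    intro c hc
    have hs : Summable fun n : ℕ => c n • (fourier (n : ℤ) : C(AddCircle (1 : ℝ), ℂ)) := by
      apply Summable.of_norm
      simpa [norm_smul, fourier_norm] using hc
    refine ⟨∑' n : ℕ, c n • (fourier (n : ℤ) : C(AddCircle (1 : ℝ), ℂ)), ?_, ?_⟩
    · intro t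
      have h1 := (ContinuousMap.evalCLM ℂ t).hasSum hs.hasSum
      have h2 := h1.tsum_eq
      rw [ContinuousMap.evalCLM_apply] at h2
      rw [← h2]
      apply tsum_congr
      intro n
      simp [fourier_apply, AddCircle.toCircle_nsmul]
    · have h1 := (ContinuousMap.toLp (E := ℂ) 2 (AddCircle.haarAddCircle (T := (1 : ℝ))) ℂ).hasSum
        hs.hasSum
      have h2 := (h1.norm.pow 2)
      have hsq : Summable fun n => ‖c n‖ ^ 2 := by
        exact sq_summable (fun _ => norm_nonneg _) hc
      refine tendsto_nhds_unique h2 ?_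
      have h3 := hsq.hasSum
      unfold HasSum at h3
      refine h3.congr ?_
      intro s
      have ho := (orthonormal_fourier (T := (1 : ℝ))).comp (fun n : ℕ => (n : ℤ))
        Nat.cast_injective
      have h4 := ho.orthogonalFamily.norm_sum c s
      rw [← h4]
      simp [LinearIsometry.toSpanSingleton_apply, fourierLp]
  obtain ⟨g, hg, hg2⟩ := main a ha
  obtain ⟨k, hk, hk2⟩ := main b hb
  rw [← hg2, ← hk2]
  gcongr
  apply MeasureTheory.Lp.norm_le_norm_of_ae_le
  filter_upwards [ContinuousMap.coeFn_toLp (E := ℂ) (p := 2) (𝕜 := ℂ) AddCircle.haarAddCircle g,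
    ContinuousMap.coeFn_toLp (E := ℂ) (p := 2) (𝕜 := ℂ) AddCircle.haarAddCircle k] with t h1 h2
  rw [h1, h2, hg, hk]
  exact hab _ (Circle.norm_coe _)

lemma key_disc (a b : ℕ → ℂ) (ha : ∀ r : ℝ, 0 ≤ r → r < 1 → Summable fun n => ‖a n‖ * r ^ n)
    (hb : ∀ r : ℝ, 0 ≤ r → r < 1 → Summable fun n => ‖b n‖ * r ^ n)
    (hb2 : Summable fun n => ‖b n‖ ^ 2)
    (hab : ∀ w ∈ Disc, ‖∑' n, a n * w ^ n‖ ≤ ‖∑' n, b n * w ^ n‖) :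
    Summable (fun n => ‖a n‖ ^ 2) ∧ (∑' n, ‖a n‖ ^ 2) ≤ ∑' n, ‖b n‖ ^ 2 := by
  have fin : ∀ s : Finset ℕ, ∑ n ∈ s, ‖a n‖ ^ 2 ≤ ∑' n, ‖b n‖ ^ 2 := by
    intro s
    have hr : ∀ r : ℝ, 0 ≤ r → r < 1 → ∑ n ∈ s, (‖a n‖ * r ^ n) ^ 2 ≤ ∑' n, ‖b n‖ ^ 2 := by
      intro r h0 h1
      have hn : ∀ c : ℕ → ℂ, ∀ n, ‖c n * (r : ℂ) ^ n‖ = ‖c n‖ * r ^ n := by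
        intro c n
        simp [abs_of_nonneg h0]
      have hsq : ∀ c : ℕ → ℂ, (∀ r : ℝ, 0 ≤ r → r < 1 → Summable fun n => ‖c n‖ * r ^ n) →
          Summable fun n => (‖c n‖ * r ^ n) ^ 2 := by
        intro c hc
        exact sq_summable (fun _ => by positivity) (hc r h0 h1)
      have h := key_circle (fun n => a n * (r : ℂ) ^ n) (fun n => b n * (r : ℂ) ^ n)
        (by simpa only [hn] using ha r h0 h1) (by simpa only [hn] using hb r h0 h1) (by
          intro w hw
          have := hab (r * w) (by simp [Disc, hw, abs_of_nonneg h0, h1])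
          simpa only [mul_pow, mul_assoc] using this)
      simp only [hn] at h
      refine ((hsq a ha).sum_le_tsum s (fun i _ => by positivity)).trans (h.trans ?_)
      refine (hsq b hb).tsum_le_tsum (fun n => ?_) hb2
      have : r ^ n ≤ 1 := pow_le_one₀ h0 h1.le
      gcongr
      exact mul_le_of_le_one_right (norm_nonneg _) this
    have hc : Tendsto (fun r : ℝ => ∑ n ∈ s, (‖a n‖ * r ^ n) ^ 2) (nhdsWithin 1 (Set.Iio 1))
        (nhds (∑ n ∈ s, (‖a n‖ * (1 : ℝ) ^ n) ^ 2)) := by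
      apply Tendsto.mono_left _ nhdsWithin_le_nhds
      apply Continuous.tendsto (f := fun r : ℝ => ∑ n ∈ s, (‖a n‖ * r ^ n) ^ 2)
      fun_prop
    simp only [one_pow, mul_one] at hc
    refine le_of_tendsto hc ?_
    filter_upwards [Ioo_mem_nhdsLT (show (0 : ℝ) < 1 by norm_num)] with r hr'
    exact hr r hr'.1.le hr'.2
  exact ⟨summable_of_sum_le (fun _ => by positivity) fin,
    Real.tsum_le_of_sum_le (fun _ => by positivity) fin⟩

lemma H2_sq (f : H2) : Summable fun n => ‖f n‖ ^ 2 := by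
  have hf : Summable fun i => ‖f i‖ ^ (2 : ℝ≥0∞).toReal :=
    (memℓp_gen_iff (by norm_num)).1 (lp.memℓp f)
  simpa using hf

lemma H2_norm (f : H2) : ‖f‖ ^ 2 = ∑' n, ‖f n‖ ^ 2 := by
  have := lp.norm_rpow_eq_tsum (p := 2) (by norm_num) f
  simpa using this

def mkH2 (a : ℕ → ℂ) (ha : Summable fun n => ‖a n‖ ^ 2) : H2 :=
  ⟨a, by
    apply memℓp_gen
    simpa using ha⟩

@[simp] lemma mkH2_apply (a : ℕ → ℂ) (ha : Summable fun n => ‖a n‖ ^ 2) (n : ℕ) :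
    mkH2 a ha n = a n := rfl

lemma H2_le (f : H2) (n : ℕ) : ‖f n‖ ≤ ‖f‖ := lp.norm_apply_le_norm (by norm_num) f n

lemma H2_summable_r (f : H2) (r : ℝ) (h0 : 0 ≤ r) (h1 : r < 1) :
    Summable fun n => ‖f n‖ * r ^ n := by
  refine Summable.of_nonneg_of_le (fun n => by positivity) (fun n => ?_)
    ((summable_geometric_of_lt_one h0 h1).mul_left ‖f‖)
  gcongr
  exact H2_le f n

lemma H2_summable (f : H2) (z : ℂ) (hz : z ∈ Disc) : Summable fun n => f n * z ^ n := by
  apply Summable.of_norm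
  have : ‖z‖ < 1 := by simpa [Disc] using hz
  simpa using H2_summable_r f ‖z‖ (norm_nonneg _) this

lemma H2_pow (f : H2) :
    HasFPowerSeriesOnBall (ev f) (FormalMultilinearSeries.ofScalars ℂ (fun n => f n)) 0 1 where
  r_le := by
    have := (FormalMultilinearSeries.ofScalars ℂ (fun n => f n)).le_radius_of_bound ‖f‖ (r := 1)
      (by
        intro n
        simp only [FormalMultilinearSeries.ofScalars_norm]
        simpa using H2_le f n)
    simpa using this
  r_pos := one_pos
  hasSum := by
    intro y hy
    have hy' : y ∈ Disc := by
      simpa [Disc, ← ENNReal.coe_one, Metric.eball_coe] using hy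
    simp only [FormalMultilinearSeries.ofScalars_apply_eq, smul_eq_mul, zero_add]
    exact (H2_summable f y hy').hasSum

lemma H2_ext_ev (f g : H2) (h : ev f =ᶠ[nhds 0] ev g) : f = g := by
  have h1 := ((H2_pow f).hasFPowerSeriesAt.congr h).eq_formalMultilinearSeries
    (H2_pow g).hasFPowerSeriesAt
  have := FormalMultilinearSeries.ofScalars_series_injective ℂ ℂ h1
  ext n
  exact congrFun this n

lemma ev_zero (f : H2) : ev f 0 = f 0 := by
  unfold ev
  rw [tsum_eq_single 0]
  · simp
  · intro n hn
    simp [hn]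

lemma ev_bsh (f : H2) (h0 : f 0 = 0) (z : ℂ) (hz : z ∈ Disc) : ev f z = z * ev (bsh f) z := by
  unfold ev
  rw [(H2_summable f z hz).tsum_eq_zero_add, h0, ← tsum_mul_left]
  simp only [zero_mul, zero_add]
  apply tsum_congr
  intro n
  simp only [bsh]
  ring

lemma bsh_fsh (f : H2) : bsh (fsh f) = f := by
  ext n
  rfl

lemma fsh_bsh (f : H2) (h0 : f 0 = 0) : fsh (bsh f) = f := by
  ext n
  cases n with
  | zero => exact h0.symm
  | succ n => rfl

lemma zero_disc : (0 : ℂ) ∈ Disc := by simp [Disc]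

lemma disc_nhds : Disc ∈ nhds (0 : ℂ) := Metric.ball_mem_nhds _ one_pos

lemma theta_zero {θ : ℂ → ℂ} (hθ : θ 0 ≠ 0) {h f : H2} (hr : ThetaRel θ h f) (h0 : h 0 = 0) :
    f 0 = 0 := by
  have := hr.2 0 zero_disc
  rw [ev_zero, ev_zero, h0] at this
  simpa [hθ] using this.symm

lemma dir_bsh {f : H2} (hf : DirMem f) : DirMem (bsh f) ∧ DNorm (bsh f) ≤ DNorm f := by
  have h1 : Summable fun i : ℕ => ‖f (i + 1)‖ ^ 2 * (((i + 1 : ℕ) : ℝ) + 1) :=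
    (summable_nat_add_iff 1).mpr hf
  have hle : ∀ i : ℕ, ‖bsh f i‖ ^ 2 * ((i : ℝ) + 1) ≤ ‖f (i + 1)‖ ^ 2 * (((i + 1 : ℕ) : ℝ) + 1) := by
    intro i
    simp only [bsh]
    push_cast
    gcongr
    linarith
  have hs : DirMem (bsh f) := Summable.of_nonneg_of_le (fun i => by positivity) hle h1
  refine ⟨hs, Real.sqrt_le_sqrt ?_⟩
  rw [hf.tsum_eq_zero_add]
  have := hs.tsum_le_tsum hle h1
  have h0 : 0 ≤ ‖f 0‖ ^ 2 * (((0 : ℕ) : ℝ) + 1) := by positivity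
  linarith

lemma theta_bsh {θ : ℂ → ℂ} (hθa : DifferentiableOn ℂ θ Disc) (hθ : θ 0 ≠ 0) {h f : H2}
    (hr : ThetaRel θ h f) (h0 : h 0 = 0) :
    ThetaRel θ (bsh h) (bsh f) := by
  have f0 := theta_zero hθ hr h0
  have hne : ∀ z ∈ Disc, z ≠ 0 → ev (bsh h) z = θ z * ev (bsh f) z := by
    intro z hz hz0
    have := hr.2 z hz
    rw [ev_bsh h h0 z hz, ev_bsh f f0 z hz] at this
    apply mul_left_cancel₀ hz0
    rw [this]
    ring
  refine ⟨(dir_bsh hr.1).1, fun z hz => ?_⟩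
  by_cases hz0 : z = 0
  · subst hz0
    have c1 : ContinuousAt (ev (bsh h)) 0 := (H2_pow _).analyticAt.continuousAt
    have c2 : ContinuousAt (ev (bsh f)) 0 := (H2_pow _).analyticAt.continuousAt
    have c3 : ContinuousAt θ 0 := (hθa.differentiableAt disc_nhds).continuousAt
    have := (c1.eventuallyEq_nhds_iff_eventuallyEq_nhdsNE (c3.mul c2)).1 (by
      filter_upwards [mem_nhdsWithin_of_mem_nhds disc_nhds, self_mem_nhdsWithin] with z hz hz0
      exact hne z hz hz0)
    exact this.eq_of_nhds
  · exact hne z hz hz0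

lemma theta_unique {θ : ℂ → ℂ} (hθa : DifferentiableOn ℂ θ Disc) (hθ : θ 0 ≠ 0) {h f f' : H2}
    (hr : ThetaRel θ h f) (hr' : ThetaRel θ h f') : f = f' := by
  apply H2_ext_ev
  have c3 : ContinuousAt θ 0 := (hθa.differentiableAt disc_nhds).continuousAt
  filter_upwards [disc_nhds, c3.eventually_ne hθ] with z hz hz0
  apply mul_left_cancel₀ hz0
  rw [← hr.2 z hz, ← hr'.2 z hz]

lemma theta_le {θ : ℂ → ℂ} (hθ1 : ∀ z ∈ Disc, ‖θ z‖ ≤ 1) {h f : H2}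
    (hr : ThetaRel θ h f) : ‖h‖ ≤ DNorm f := by
  have := (key_disc (fun n => h n) (fun n => f n) (H2_summable_r h) (H2_summable_r f) (H2_sq f) (by
    intro w hw
    change ‖ev h w‖ ≤ ‖ev f w‖
    rw [hr.2 w hw, norm_mul]
    exact mul_le_of_le_one_left (norm_nonneg _) (hθ1 w hw))).2
  apply Real.le_sqrt_of_sq_le
  rw [H2_norm]
  refine this.trans ((H2_sq f).tsum_le_tsum (fun n => ?_) hr.1)
  apply le_mul_of_one_le_right (by positivity)
  have : (0 : ℝ) ≤ n := by positivity
  linarith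

lemma theta_mem {θ : ℂ → ℂ} (hθa : DifferentiableOn ℂ θ Disc) (hθ1 : ∀ z ∈ Disc, ‖θ z‖ ≤ 1) :
    ∃ t : H2, ∀ z ∈ Disc, ev t z = θ z := by
  have hs : ∀ z ∈ Disc, HasSum (fun n : ℕ => ((n.factorial : ℂ)⁻¹ * iteratedDeriv n θ 0) * z ^ n)
      (θ z) := by
    intro z hz
    have := Complex.hasSum_taylorSeries_on_ball (c := 0) (r := 1) (f := θ)
      (by simpa [Disc] using hθa) (z := z) (by simpa [Disc] using hz)
    refine this.congr_fun ?_
    intro n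
    simp
    ring
  have := (key_disc (fun n : ℕ => ((n.factorial : ℂ)⁻¹ * iteratedDeriv n θ 0))
    (fun n => if n = 0 then 1 else 0) (by
      intro r h0 h1
      have := (hs r (by simp [Disc, abs_of_nonneg h0, h1])).summable.norm
      simpa [abs_of_nonneg h0] using this) (by
      intro r h0 h1
      apply summable_of_ne_finset_zero (s := {0})
      intro n hn
      have : n ≠ 0 := by simpa using hn
      simp [this]) (by
      apply summable_of_ne_finset_zero (s := {0})
      intro n hn
      have : n ≠ 0 := by simpa using hn
      simp [this]) (by
      intro w hw
      rw [(hs w hw).tsum_eq]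
      simpa using hθ1 w hw)).1
  exact ⟨mkH2 _ this, fun z hz => (hs z hz).tsum_eq⟩

lemma dir_complete (F : ℕ → H2) (hF : ∀ n, DirMem (F n))
    (hc : ∀ ε > (0 : ℝ), ∃ N : ℕ, ∀ m ≥ N, ∀ n ≥ N, DNorm (F m - F n) < ε) :
    ∃ f : H2, DirMem f ∧ Tendsto (fun n => DNorm (F n - f)) atTop (nhds 0) := by
  have hw : ∀ i : ℕ, 0 < Real.sqrt ((i : ℝ) + 1) := fun i => Real.sqrt_pos.2 (by positivity)
  have hw1 : ∀ i : ℕ, 1 ≤ Real.sqrt ((i : ℝ) + 1) := fun i => by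
    rw [Real.one_le_sqrt]
    have : (0 : ℝ) ≤ i := by positivity
    linarith
  have hsq : ∀ (a : ℂ) (i : ℕ), ‖a * (Real.sqrt ((i : ℝ) + 1) : ℂ)‖ ^ 2 = ‖a‖ ^ 2 * ((i : ℝ) + 1) := by
    intro a i
    rw [norm_mul, mul_pow, Complex.norm_real, Real.norm_eq_abs, sq_abs,
      Real.sq_sqrt (by positivity)]
  let G : ℕ → H2 := fun n => mkH2 (fun i => F n i * (Real.sqrt ((i : ℝ) + 1) : ℂ)) (by
    simp only [hsq]
    exact hF n)
  have hD : ∀ (f g : H2), (∀ i, g i = f i * (Real.sqrt ((i : ℝ) + 1) : ℂ)) → DNorm f = ‖g‖ := by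
    intro f g h
    unfold DNorm
    rw [← Real.sqrt_sq (norm_nonneg g), H2_norm]
    simp only [h, hsq]
  have hG : CauchySeq G := by
    rw [Metric.cauchySeq_iff]
    intro ε hε
    obtain ⟨N, hN⟩ := hc ε hε
    refine ⟨N, fun m hm n hn => ?_⟩
    rw [dist_eq_norm, ← hD (F m - F n) (G m - G n)]
    · exact hN m hm n hn
    · intro i
      simp [G, sub_mul]
  obtain ⟨g, hg⟩ := cauchySeq_tendsto_of_complete hG
  have hcan : ∀ i : ℕ, g i / (Real.sqrt ((i : ℝ) + 1) : ℂ) * (Real.sqrt ((i : ℝ) + 1) : ℂ) = g i := by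
    intro i
    apply div_mul_cancel₀
    exact Complex.ofReal_ne_zero.2 (hw i).ne'
  let f : H2 := mkH2 (fun i => g i / (Real.sqrt ((i : ℝ) + 1) : ℂ)) (by
    refine Summable.of_nonneg_of_le (fun i => by positivity) (fun i => ?_) (H2_sq g)
    gcongr
    rw [norm_div, Complex.norm_real, Real.norm_eq_abs, abs_of_pos (hw i)]
    exact div_le_self (norm_nonneg _) (hw1 i))
  have hfg : ∀ i, g i = f i * (Real.sqrt ((i : ℝ) + 1) : ℂ) := fun i => (hcan i).symm
  refine ⟨f, ?_, ?_⟩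
  · unfold DirMem
    simp only [← hsq, ← hfg]
    exact H2_sq g
  · have : ∀ n, DNorm (F n - f) = ‖G n - g‖ := by
      intro n
      apply hD
      intro i
      simp [G, sub_mul, hfg]
    simp only [this]
    exact tendsto_iff_norm_sub_tendsto_zero.1 hg

lemma single_sq (c : ℂ) : Summable fun n : ℕ => ‖(if n = 0 then c else 0 : ℂ)‖ ^ 2 := by
  apply summable_of_ne_finset_zero (s := {0})
  intro n hn
  have : n ≠ 0 := by simpa using hn
  simp [this]

def cst (c : ℂ) : H2 := mkH2 (fun n => if n = 0 then c else 0) (single_sq c)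

lemma cst_apply (c : ℂ) (n : ℕ) : cst c n = if n = 0 then c else 0 := rfl

lemma cst_ev (c z : ℂ) : ev (cst c) z = c := by
  unfold ev
  simp [cst_apply]

lemma cst_dir (c : ℂ) : DirMem (cst c) := by
  apply summable_of_ne_finset_zero (s := {0})
  intro n hn
  have : n ≠ 0 := by simpa using hn
  simp [cst_apply, this]

lemma span_eq {θ : ℂ → ℂ} (hθa : DifferentiableOn ℂ θ Disc) (hθ1 : ∀ z ∈ Disc, ‖θ z‖ ≤ 1)
    (hθ : θ 0 ≠ 0) :
    {h : H2 | ∃ f, ThetaRel θ h f ∧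
        ∀ h' f' : H2, ThetaRel θ h' f' → h' 0 = 0 → DInner f f' = 0}
      = {h : H2 | ∃ c : ℂ, ∀ z ∈ Disc, ev h z = c * θ z} := by
  ext h
  constructor
  · rintro ⟨f, hr, ho⟩
    refine ⟨f 0, ?_⟩
    obtain ⟨t, ht⟩ := theta_mem hθa hθ1
    have hsub : ∀ z ∈ Disc, ev (f - cst (f 0)) z = ev f z - f 0 := by
      intro z hz
      have e := cst_ev (f 0) z
      rw [← sub_right_inj (a := ev f z)] at e
      rw [← e]
      unfold ev
      rw [← (H2_summable f z hz).tsum_sub (H2_summable _ z hz)]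
      simp [sub_mul]
    have hsub2 : ∀ z ∈ Disc, ev (h - f 0 • t) z = ev h z - f 0 * θ z := by
      intro z hz
      rw [← ht z hz]
      unfold ev
      rw [← tsum_mul_left, ← (H2_summable h z hz).tsum_sub ((H2_summable t z hz).mul_left _)]
      apply tsum_congr
      intro n
      change (h n - f 0 * t n) * z ^ n = _
      ring
    have hval : ∀ i, (f - cst (f 0)) i = if i = 0 then 0 else f i := by
      intro i
      by_cases hi : i = 0
      · subst hi
        simp [cst_apply]
      · simp [cst_apply, hi]
    have hr' : ThetaRel θ (h - f 0 • t) (f - cst (f 0)) := by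
      refine ⟨?_, ?_⟩
      · refine Summable.of_nonneg_of_le (fun i => by positivity) (fun i => ?_) hr.1
        rw [hval]
        gcongr
        split_ifs <;> simp
      · intro z hz
        rw [hsub2 z hz, hsub z hz, hr.2 z hz]
        ring
    have h0 : (h - f 0 • t) 0 = 0 := by
      have := hr'.2 0 zero_disc
      rw [ev_zero, ev_zero, hval] at this
      simpa using this
    have hin := ho _ _ hr' h0
    have hterm : ∀ i : ℕ, ((i : ℂ) + 1) * (starRingEnd ℂ) (f i) * (f - cst (f 0)) i
        = ((‖(f - cst (f 0)) i‖ ^ 2 * ((i : ℝ) + 1) : ℝ) : ℂ) := by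
      intro i
      rw [hval]
      split_ifs
      · simp
      · push_cast
        rw [← Complex.conj_mul']
        ring
    unfold DInner at hin
    simp only [hterm] at hin
    rw [← Complex.ofReal_tsum] at hin
    have hin' : ∑' i : ℕ, ‖(f - cst (f 0)) i‖ ^ 2 * ((i : ℝ) + 1) = 0 := by exact_mod_cast hin
    have hz : f - cst (f 0) = 0 := by
      ext i
      have h1 := (hr'.1.hasSum_iff.2 hin')
      have h2 := (hasSum_zero_iff_of_nonneg (fun i => by positivity)).1 h1
      have h3 := congrFun h2 i
      have : ((i : ℝ) + 1) ≠ 0 := by positivity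
      simp only [Pi.zero_apply, mul_eq_zero, this, or_false] at h3
      simpa using h3
    intro z hz'
    have := hsub z hz'
    rw [hz] at this
    have h4 : ev f z = f 0 := by
      have e : ev (0 : H2) z = 0 := by simp [ev]
      rw [e] at this
      exact (sub_eq_zero.1 this.symm)
    rw [hr.2 z hz', h4, mul_comm]
  · rintro ⟨c, hc⟩
    refine ⟨cst c, ⟨cst_dir c, fun z hz => ?_⟩, ?_⟩
    · rw [hc z hz, cst_ev, mul_comm]
    · intro h' f' hr' h0
      have f0 := theta_zero hθ hr' h0
      unfold DInner
      convert tsum_zero with i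
      by_cases hi : i = 0
      · subst hi
        simp [f0]
      · simp [cst_apply, hi]

/- STATEMENT 12: Let 𝒟 be the Dirichlet space and let θ be a bounded analytic function on 𝔻
with ‖θ‖_∞ = 1 and θ(0) > 0.  Set M = θ𝒟 with ‖θf‖_M := ‖f‖_𝒟.  Then M is a well-defined
Hilbert space contractively contained in H²(𝔻) (the representative f of θf is unique, 𝒟 —
and hence M — is complete, and ‖θf‖₂ ≤ ‖θf‖_M), M is nearly S*-invariant,
‖zg‖_M ≥ ‖g‖_M whenever zg ∈ M, and M ⊖ (M ∩ zH²(𝔻)) = span{θ}. -/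
theorem stmt12
    (θ : ℂ → ℂ) (hθa : DifferentiableOn ℂ θ Disc)
    (hθb : ∃ C : ℝ, ∀ z ∈ Disc, ‖θ z‖ ≤ C)
    (hθ1 : sSup ((fun z => ‖θ z‖) '' Disc) = 1)
    (hθ0 : (θ 0).im = 0 ∧ 0 < (θ 0).re) :
    -- the norm on M = θ𝒟 is well defined (representatives are unique):
    (∀ h f f' : H2, ThetaRel θ h f → ThetaRel θ h f' → f = f') ∧
    -- M is a Hilbert space: 𝒟 (≅ M isometrically) is complete
    -- (its norm comes from the inner product DInner by construction):
    (∀ F : ℕ → H2, (∀ n, DirMem (F n)) →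
      (∀ ε > (0 : ℝ), ∃ N : ℕ, ∀ m ≥ N, ∀ n ≥ N, DNorm (F m - F n) < ε) →
      ∃ f : H2, DirMem f ∧ Tendsto (fun n => DNorm (F n - f)) atTop (nhds 0)) ∧
    -- M is contractively contained in H²(𝔻):
    (∀ h f : H2, ThetaRel θ h f → ‖h‖ ≤ DNorm f) ∧
    -- M is nearly invariant under the backward shift:
    (∀ h : H2, (∃ f, ThetaRel θ h f) → h 0 = 0 → ∃ f', ThetaRel θ (bsh h) f') ∧
    -- ‖zg‖_M ≥ ‖g‖_M whenever zg ∈ M: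
    (∀ g f : H2, ThetaRel θ (fsh g) f → ∃ f', ThetaRel θ g f' ∧ DNorm f' ≤ DNorm f) ∧
    -- M ⊖ (M ∩ zH²(𝔻)) = span{θ}:
    {h : H2 | ∃ f, ThetaRel θ h f ∧
        ∀ h' f' : H2, ThetaRel θ h' f' → h' 0 = 0 → DInner f f' = 0}
      = {h : H2 | ∃ c : ℂ, ∀ z ∈ Disc, ev h z = c * θ z} := by
  have hle : ∀ z ∈ Disc, ‖θ z‖ ≤ 1 := by
    obtain ⟨C, hC⟩ := hθb
    intro z hz
    rw [← hθ1]
    refine le_csSup ⟨C, ?_⟩ ⟨z, hz, rfl⟩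
    rintro _ ⟨w, hw, rfl⟩
    exact hC w hw
  have hne : θ 0 ≠ 0 := by
    intro h
    rw [h] at hθ0
    simp at hθ0
  refine ⟨fun h f f' hr hr' => theta_unique hθa hne hr hr', dir_complete,
    fun h f hr => theta_le hle hr, fun h hf h0 => ?_, fun g f hr => ?_, span_eq hθa hle hne⟩
  · obtain ⟨f, hr⟩ := hf
    exact ⟨_, theta_bsh hθa hne hr h0⟩
  · refine ⟨bsh f, ?_, (dir_bsh hr.1).2⟩
    have := theta_bsh hθa hne hr rfl
    rwa [bsh_fsh] at this
end
end

section
/- Let 𝒟 be the Dirichlet space of analytic functions f(z) = Σ_{i≥0} a_i z^i on the open unit disc with ‖f‖²_𝒟 = Σ_{i≥0} |a_i|²(i + 1) < ∞. Let θ be a bounded analytic function on 𝔻 with ‖θ‖_∞ = 1 and θ(0) > 0, and let M = θ𝒟 with norm ‖θf‖_M := ‖f‖_𝒟. Then the S*-invariant vector subspace N = {f ∈ H²(𝔻) : θf ∈ M} arising in the representation M = θN equals 𝒟, and 𝒟 is not a closed subspace of H²(𝔻) (so the S*-invariant subspace in the representation of a nearly S*-invariant contractively contained Hilbert space need not be closed).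 -/
noncomputable section
open scoped ENNReal

lemma ev_summable_norm (f : H2) {z : ℂ} (hz : ‖z‖ < 1) : Summable fun m => ‖f m * z ^ m‖ := by
  refine Summable.of_nonneg_of_le (fun _ => norm_nonneg _) (fun m => ?_)
    ((summable_geometric_of_lt_one (norm_nonneg z) hz).mul_left ‖f‖)
  rw [norm_mul, norm_pow]
  gcongr
  exact lp.norm_apply_le_norm (by norm_num) f m

lemma ev_hasSum (f : H2) {z : ℂ} (hz : ‖z‖ < 1) : HasSum (fun m => f m * z ^ m) (ev f z) :=
  (ev_summable_norm f hz).of_norm.hasSum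

lemma ev_diff (f : H2) : DifferentiableOn ℂ (ev f) Disc := by
  intro z hz
  have hz1 : ‖z‖ < 1 := by simpa [Disc] using hz
  obtain ⟨r, hr, hr1⟩ := exists_between hz1
  have hr0 : 0 ≤ r := (norm_nonneg z).trans hr.le
  have hs : Summable fun m => ‖f m * (r : ℂ) ^ m‖ :=
    ev_summable_norm f (by simpa [abs_of_nonneg hr0] using hr1)
  have : DifferentiableOn ℂ (ev f) (Metric.ball (0 : ℂ) r) := by
    refine Complex.differentiableOn_tsum_of_summable_norm hs (fun m => by fun_prop) Metric.isOpen_ball ?_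
    intro m w hw
    have hw1 : ‖w‖ < r := by simpa using hw
    rw [norm_mul, norm_mul, norm_pow, norm_pow, Complex.norm_real, Real.norm_of_nonneg hr0]
    gcongr
  exact (this.differentiableAt (Metric.isOpen_ball.mem_nhds (by simpa using hr))).differentiableWithinAt

lemma ev_series (f : H2) :
    HasFPowerSeriesAt (ev f) (FormalMultilinearSeries.ofScalars ℂ (fun n => f n)) 0 := by
  rw [hasFPowerSeriesAt_iff]
  filter_upwards [Metric.ball_mem_nhds (0 : ℂ) one_pos] with z hz
  have hz1 : ‖z‖ < 1 := by simpa using hz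
  simpa [mul_comm] using ev_hasSum f hz1

lemma ev_inj (f g : H2) (h : ∀ᶠ z in nhds (0 : ℂ), ev f z = ev g z) : f = g := by
  have := ((ev_series f).congr h).eq_formalMultilinearSeries (ev_series g)
  ext n
  have h2 := congrArg (fun p => FormalMultilinearSeries.coeff p n) this
  simpa using h2

lemma fourier_facts (a : ℕ → ℂ) (ha : Summable fun n => ‖a n‖) :
    ∃ G : C(AddCircle (1 : ℝ), ℂ), (∀ x, HasSum (fun n => a n * (fourier 1 x) ^ n) (G x)) ∧
      HasSum (fun n => ‖a n‖ ^ 2)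
        (‖ContinuousMap.toLp (E := ℂ) 2 (AddCircle.haarAddCircle (T := 1)) ℂ G‖ ^ 2) := by
  have hs : Summable fun n : ℕ => a n • (fourier (n : ℤ) : C(AddCircle (1 : ℝ), ℂ)) := by
    refine Summable.of_norm ?_
    simpa [norm_smul, fourier_norm] using ha
  refine ⟨∑' n : ℕ, a n • (fourier (n : ℤ) : C(AddCircle (1 : ℝ), ℂ)), ?_, ?_⟩
  · intro x
    have := (ContinuousMap.evalCLM ℂ x).hasSum hs.hasSum
    refine (congrArg (fun u => HasSum u _) (funext fun n => ?_)).mp this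
    simp [fourier_apply, AddCircle.toCircle_nsmul]
  · have h1 := (ContinuousMap.toLp (E := ℂ) 2 (AddCircle.haarAddCircle (T := 1)) ℂ).hasSum hs.hasSum
    have h2 := (h1.norm.pow 2)
    have ho : Orthonormal ℂ (fun n : ℕ => fourierLp (T := 1) 2 (n : ℤ)) :=
      orthonormal_fourier.comp _ Nat.cast_injective
    unfold HasSum at *
    refine h2.congr fun s => ?_
    have := ho.inner_sum a a s
    rw [← inner_self_eq_norm_sq (𝕜 := ℂ)]
    simp only [Function.comp_apply, map_smul]
    erw [this]
    simp [← Complex.ofReal_pow, Complex.conj_mul']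

lemma fourier_le (a b : ℕ → ℂ) (ha : Summable fun n => ‖a n‖) (hb : Summable fun n => ‖b n‖)
    (h : ∀ w : ℂ, ‖w‖ = 1 → ‖∑' n, a n * w ^ n‖ ≤ ‖∑' n, b n * w ^ n‖) :
    Summable (fun n => ‖a n‖ ^ 2) ∧ ∑' n, ‖a n‖ ^ 2 ≤ ∑' n, ‖b n‖ ^ 2 := by
  obtain ⟨A, hA, hA2⟩ := fourier_facts a ha
  obtain ⟨B, hB, hB2⟩ := fourier_facts b hb
  refine ⟨hA2.summable, ?_⟩
  rw [hA2.tsum_eq, hB2.tsum_eq]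
  gcongr
  refine MeasureTheory.Lp.norm_le_norm_of_ae_le ?_
  filter_upwards [ContinuousMap.coeFn_toLp (p := 2) (𝕜 := ℂ) (AddCircle.haarAddCircle (T := 1)) A,
    ContinuousMap.coeFn_toLp (p := 2) (𝕜 := ℂ) (AddCircle.haarAddCircle (T := 1)) B] with x h1 h2
  rw [h1, h2, ← (hA x).tsum_eq, ← (hB x).tsum_eq]
  exact h _ (by rw [fourier_apply]; exact Circle.norm_coe _)

lemma mult_exists (θ : ℂ → ℂ) (hθa : DifferentiableOn ℂ θ Disc) (h1 : ∀ z ∈ Disc, ‖θ z‖ ≤ 1)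
    (f : H2) : ∃ h : H2, ∀ z ∈ Disc, ev h z = θ z * ev f z := by
  set F : ℂ → ℂ := fun z => θ z * ev f z with hF
  have hFd : DifferentiableOn ℂ F (Metric.ball 0 1) := hθa.mul (ev_diff f)
  set c : ℕ → ℂ := fun n => ((n.factorial : ℂ))⁻¹ * iteratedDeriv n F 0 with hc
  have hsum : ∀ z : ℂ, ‖z‖ < 1 → HasSum (fun n => c n * z ^ n) (F z) := by
    intro z hz
    have := Complex.hasSum_taylorSeries_on_ball hFd (z := z) (by simpa using hz)
    refine (congrArg (fun u => HasSum u _) (funext fun n => ?_)).mp this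
    simp only [hc, sub_zero, smul_eq_mul]
    ring
  have hf2 : Summable fun n => ‖f n‖ ^ 2 := by
    have := (lp.memℓp f).summable (by norm_num)
    simpa using this
  have key : ∀ r : ℝ, 0 < r → r < 1 → ∀ s : Finset ℕ,
      ∑ n ∈ s, ‖c n * (r : ℂ) ^ n‖ ^ 2 ≤ ∑' n, ‖f n‖ ^ 2 := by
    intro r hr hr1 s
    have hrn : ‖(r : ℂ)‖ < 1 := by simpa [abs_of_pos hr] using hr1
    have hfs := ev_summable_norm f hrn
    obtain ⟨k1, k2⟩ := fourier_le (fun n => c n * (r : ℂ) ^ n) (fun n => f n * (r : ℂ) ^ n)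
      (hsum r hrn).summable.norm hfs (by
        intro w hw
        have hrw : ‖(r : ℂ) * w‖ < 1 := by rw [norm_mul, hw, mul_one]; exact hrn
        have e1 := (hsum _ hrw).tsum_eq
        have e2 := (ev_hasSum f hrw).tsum_eq
        simp only [mul_pow, ← mul_assoc] at e1 e2
        rw [e1, e2, hF]
        simp only [norm_mul]
        exact mul_le_of_le_one_left (norm_nonneg _)
          (h1 _ (by simpa only [Disc, mem_ball_zero_iff] using hrw)))
    refine (k1.sum_le_tsum s (fun _ _ => by positivity)).trans (k2.trans ?_)
    have hle : ∀ n, ‖f n * (r : ℂ) ^ n‖ ^ 2 ≤ ‖f n‖ ^ 2 := by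
      intro n
      gcongr
      rw [norm_mul, norm_pow]
      exact mul_le_of_le_one_right (norm_nonneg _) (pow_le_one₀ (norm_nonneg _) hrn.le)
    exact Summable.tsum_le_tsum hle (Summable.of_nonneg_of_le (fun _ => by positivity) hle hf2) hf2
  have key1 : ∀ s : Finset ℕ, ∑ n ∈ s, ‖c n‖ ^ 2 ≤ ∑' n, ‖f n‖ ^ 2 := by
    intro s
    have hcont : Continuous fun r : ℝ => ∑ n ∈ s, ‖c n * (r : ℂ) ^ n‖ ^ 2 := by fun_prop
    have ht : Filter.Tendsto (fun r : ℝ => ∑ n ∈ s, ‖c n * (r : ℂ) ^ n‖ ^ 2)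
        (nhdsWithin 1 (Set.Iio 1)) (nhds (∑ n ∈ s, ‖c n‖ ^ 2)) := by
      have := (hcont.tendsto 1).mono_left (nhdsWithin_le_nhds (s := Set.Iio 1))
      simpa using this
    refine le_of_tendsto ht ?_
    filter_upwards [Ioo_mem_nhdsLT (zero_lt_one (α := ℝ))] with r hr
    exact key r hr.1 hr.2 s
  have hcs : Summable fun n => ‖c n‖ ^ 2 :=
    summable_of_sum_le (fun _ => by positivity) key1
  have hm : Memℓp c 2 := memℓp_gen (by simpa using hcs)
  refine ⟨⟨c, hm⟩, fun z hz => ?_⟩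
  exact (hsum z (by simpa [Disc] using hz)).tsum_eq

lemma dir_not_closed : ¬ IsClosed {f : H2 | DirMem f} := by
  intro hcl
  have hall : ∀ f : H2, DirMem f := by
    intro f
    have hs := lp.hasSum_single (p := 2) (by norm_num) f
    refine hcl.mem_of_tendsto hs (Filter.Eventually.of_forall fun s => ?_)
    refine summable_of_ne_finset_zero (s := s) ?_
    intro n hn
    have : (∑ i ∈ s, lp.single 2 i (f i) : H2) n = 0 := by
      rw [lp.coeFn_sum, Finset.sum_apply]
      refine Finset.sum_eq_zero fun i hi => ?_
      have : n ≠ i := fun h => hn (h ▸ hi)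
      simp [lp.single_apply, Pi.single_apply, this]
    rw [this]
    simp
  have hm : Memℓp (fun n : ℕ => (((n : ℝ) + 1 : ℝ) : ℂ)⁻¹) 2 := by
    refine memℓp_gen ?_
    have := (summable_nat_add_iff 1).2 (Real.summable_nat_pow_inv.2 one_lt_two)
    refine this.congr fun n => ?_
    rw [norm_inv, Complex.norm_real, Real.norm_of_nonneg (by positivity)]
    simp
  have h := hall ⟨_, hm⟩
  have h2 : Summable fun n : ℕ => ((n + 1 : ℕ) : ℝ)⁻¹ := by
    refine h.congr fun n => ?_
    have e : ‖(((n : ℝ) + 1 : ℝ) : ℂ)⁻¹‖ = ((n : ℝ) + 1)⁻¹ := by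
      rw [norm_inv, Complex.norm_real, Real.norm_of_nonneg (by positivity)]
    change ‖(((n : ℝ) + 1 : ℝ) : ℂ)⁻¹‖ ^ 2 * ((n : ℝ) + 1) = _
    rw [e]
    push_cast
    field_simp
  exact Real.not_summable_natCast_inv ((summable_nat_add_iff 1).1 h2)

/- STATEMENT 13: Let 𝒟 be the Dirichlet space and θ a bounded analytic function on 𝔻 with
‖θ‖_∞ = 1 and θ(0) > 0, and M = θ𝒟 with ‖θf‖_M := ‖f‖_𝒟.  Then the S*-invariant vector
subspace N = {f ∈ H²(𝔻) : θf ∈ M} arising in the representation M = θN equals 𝒟, and 𝒟 is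
not closed in H²(𝔻). -/
theorem stmt13
    (θ : ℂ → ℂ) (hθa : DifferentiableOn ℂ θ Disc)
    (hθb : ∃ C : ℝ, ∀ z ∈ Disc, ‖θ z‖ ≤ C)
    (hθ1 : sSup ((fun z => ‖θ z‖) '' Disc) = 1)
    (hθ0 : (θ 0).im = 0 ∧ 0 < (θ 0).re) :
    -- N = {f ∈ H²(𝔻) : θf ∈ M} equals the Dirichlet space 𝒟 …
    {f : H2 | ∃ h : H2, (∃ f', ThetaRel θ h f') ∧ ∀ z ∈ Disc, ev h z = θ z * ev f z}
      = {f : H2 | DirMem f} ∧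
    -- … which is not a closed subspace of H²(𝔻):
    ¬ IsClosed {f : H2 | DirMem f} := by
  refine ⟨?_, dir_not_closed⟩
  have h1 : ∀ z ∈ Disc, ‖θ z‖ ≤ 1 := by
    intro z hz
    obtain ⟨C, hC⟩ := hθb
    rw [← hθ1]
    refine le_csSup ⟨C, ?_⟩ ⟨z, hz, rfl⟩
    rintro _ ⟨w, hw, rfl⟩
    exact hC w hw
  have hD : Disc ∈ nhds (0 : ℂ) := Metric.ball_mem_nhds _ one_pos
  ext f
  constructor
  · rintro ⟨h, ⟨f', hf', e'⟩, e⟩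
    have hne : θ 0 ≠ 0 := fun h0 => by simp [h0] at hθ0
    have hc : ContinuousAt θ 0 := (hθa.differentiableAt hD).continuousAt
    have : f = f' := by
      refine ev_inj f f' ?_
      filter_upwards [hD, hc.eventually_ne hne] with z hz hz0
      exact mul_left_cancel₀ hz0 ((e z hz).symm.trans (e' z hz))
    rw [this]
    exact hf'
  · intro hf
    obtain ⟨h, hh⟩ := mult_exists θ hθa h1 f
    exact ⟨h, ⟨f, hf, hh⟩, hh⟩
end
end
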